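/- For every n ≥ 3, the covering type of the special unitary group SU(n) satisfies ct(SU(n)) ≥ (4n³ − 3n² + 5n + 6)/6; that is, for every topological space Y homotopy equivalent to SU(n) and every good cover U of Y, U has at least (4n³ − 3n² + 5n + 6)/6 members. -/

import Mathlib

/-- A good cover of `Y`: a finite family of open subsets covering `Y` such that every
nonempty intersection of (finitely many) members is contractible. -/
def IsGoodCover {Y : Type*} [TopologicalSpace Y] (U : Finset (Set Y)) : Prop :=
  (∀ s ∈ U, IsOpen s) ∧ (⋃₀ (U : Set (Set Y)) = Set.univ) ∧
    ∀ T ⊆ U, T.Nonempty → (⋂₀ (T : Set (Set Y))).Nonempty →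
      ContractibleSpace ↥(⋂₀ (T : Set (Set Y)))

namespace CT

abbrev R := ZMod 2

theorem add_self (x : R) : x + x = 0 := CharTwo.add_self_eq_zero x

theorem eq_of_add_zero {x y : R} (h : x + y = 0) : x = y := CharTwo.add_eq_zero.mp h

section lists
variable {V : Type*} {W : Type*}

/-- list coboundary -/
def ld : (List V → R) → List V → R
  | _, [] => 0
  | F, v :: l => F l + ld (fun l' => F (v :: l')) l

theorem ld_congr (l : List V) : ∀ (F G : List V → R),
    (∀ l', List.Sublist l' l → l'.length + 1 = l.length → F l' = G l') → ld F l = ld G l := by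
  induction l with
  | nil => intro F G h; rfl
  | cons v l ih =>
    intro F G h
    simp only [ld]
    rw [h l (List.sublist_cons_self v l) (by simp), ih]
    intro l' h1 h2
    exact h _ (h1.cons_cons v) (by simp [h2])

theorem ld_add (l : List V) : ∀ (F G : List V → R),
    ld (fun l => F l + G l) l = ld F l + ld G l := by
  induction l with
  | nil => intro F G; simp [ld]
  | cons v l ih => intro F G; simp only [ld]; rw [ih]; ring

theorem ld_zero (l : List V) : ld (fun _ => (0 : R)) l = 0 := by
  induction l with
  | nil => rfl
  | cons v l ih => simp only [ld]; rw [ih]; simp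

theorem ld_smul (c : R) (l : List V) : ∀ (F : List V → R),
    ld (fun l => c * F l) l = c * ld F l := by
  induction l with
  | nil => intro F; simp [ld]
  | cons v l ih => intro F; simp only [ld]; rw [ih]; ring

theorem ld_ld (l : List V) : ∀ (F : List V → R), ld (ld F) l = 0 := by
  induction l with
  | nil => intro F; rfl
  | cons v l ih =>
    intro F
    simp only [ld]
    rw [ld_add, ih, add_zero, add_self]

theorem ld_map (f : V → W) (l : List V) : ∀ (F : List W → R),
    ld (fun l => F (l.map f)) l = ld F (l.map f) := by
  induction l with
  | nil => intro F; rfl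
  | cons v l ih =>
    intro F
    simp only [ld, List.map_cons]
    rw [← ih]

/-- list cup product -/
def lcup : (List V → R) → (List V → R) → List V → R
  | _, _, [] => 0
  | F, G, v :: l => F [v] * G (v :: l) + lcup (fun l' => F (v :: l')) G l

theorem lcup_map (f : V → W) (l : List V) : ∀ (F G : List W → R),
    lcup (fun l => F (l.map f)) (fun l => G (l.map f)) l = lcup F G (l.map f) := by
  induction l with
  | nil => intro F G; rfl
  | cons v l ih =>
    intro F G
    simp only [lcup, List.map_cons, List.map_nil]
    rw [← ih]

theorem lcup_add_left (l : List V) : ∀ (F F' G : List V → R),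
    lcup (fun l => F l + F' l) G l = lcup F G l + lcup F' G l := by
  induction l with
  | nil => intro F F' G; simp [lcup]
  | cons v l ih => intro F F' G; simp only [lcup]; rw [ih]; ring

theorem lcup_add_right (l : List V) : ∀ (F G G' : List V → R),
    lcup F (fun l => G l + G' l) l = lcup F G l + lcup F G' l := by
  induction l with
  | nil => intro F F' G; simp [lcup]
  | cons v l ih => intro F F' G; simp only [lcup]; rw [ih]; ring

theorem lcup_zero_left (l : List V) : ∀ (G : List V → R),
    lcup (fun _ => 0) G l = 0 := by
  induction l with
  | nil => intro G; simp [lcup]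
  | cons v l ih => intro G; simp only [lcup]; rw [ih]; ring

theorem lcup_zero_right (l : List V) : ∀ (F : List V → R),
    lcup F (fun _ => 0) l = 0 := by
  induction l with
  | nil => intro G; simp [lcup]
  | cons v l ih => intro G; simp only [lcup]; rw [ih]; ring

theorem lcup_smul_left (c : R) (l : List V) : ∀ (F G : List V → R),
    lcup (fun l => c * F l) G l = c * lcup F G l := by
  induction l with
  | nil => intro F G; simp [lcup]
  | cons v l ih => intro F G; simp only [lcup]; rw [ih]; ring

theorem leibniz (G : List V → R) (hG : G [] = 0) (l : List V) : ∀ (F : List V → R),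
    ld (lcup F G) l = lcup (ld F) G l + lcup F (ld G) l + F [] * G l := by
  induction l with
  | nil => intro F; simp [ld, lcup, hG]
  | cons v l ih =>
    intro F
    have e1 : lcup (ld F) G (v :: l) = F [] * G (v :: l) + lcup F G l
        + lcup (ld (fun l' => F (v :: l'))) G l := by
      simp only [lcup, ld]
      rw [lcup_add_left]; ring
    rw [e1]
    simp only [ld, lcup]
    rw [ld_add, ld_smul, ih]
    have h2 := add_self (F [] * G (v :: l))
    have h3 := add_self (F [v] * G l)
    linear_combination - h2 

/-- homogeneity of cup products -/
theorem lcup_deg (q : ℕ) (G : List V → R) (hG : ∀ l, l.length ≠ q + 1 → G l = 0) (l : List V) :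
    ∀ (p : ℕ) (F : List V → R), (∀ l, l.length ≠ p → F l = 0) → l.length ≠ p + q →
    lcup F G l = 0 := by
  induction l with
  | nil => intros; rfl
  | cons v l ih =>
    intro p F hF hl
    simp only [lcup]
    have hl' : l.length + 1 ≠ p + q := by simpa using hl
    rcases p with _ | p
    · have : ∀ l', F (v :: l') = 0 := fun l' => hF _ (by simp)
      simp only [this]
      rw [lcup_zero_left]; simp
    · rw [ih p (fun l' => F (v :: l')) (fun l' h => hF _ (by simpa using h)) (by omega)]
      by_cases h : p = 0
      · subst h
        rw [hG (v :: l) (by simp; omega)]; simp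
      · rw [hF [v] (by simp; omega)]; simp

/-- unit -/
theorem lcup_one (G : List V → R) (l : List V) :
    lcup (fun l => if l.length = 1 then 1 else 0) G l = if l = [] then 0 else G l := by
  cases l with
  | nil => rfl
  | cons v l =>
    simp only [lcup]
    cases l with
    | nil => simp [lcup]
    | cons w l =>
      have : lcup (fun l' : List V => if (v :: l').length = 1 then (1 : R) else 0) G (w :: l) = 0 := by
        simp only [List.length_cons, Nat.add_eq_right, List.length_eq_zero_iff]
        simp only [lcup]
        simp only [reduceCtorEq, if_false, zero_mul, zero_add]
        exact lcup_zero_left l G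
      rw [this]; simp

abbrev II := unitInterval

/-- prism -/
def lP : (List (II × V) → R) → List V → R
  | _, [] => 0
  | F, v :: l => F ((0, v) :: (1, v) :: l.map (fun w => (1, w))) + lP (fun l' => F ((0, v) :: l')) l

theorem lP_add (l : List V) : ∀ (F G : List (II × V) → R),
    lP (fun l => F l + G l) l = lP F l + lP G l := by
  induction l with
  | nil => intro F G; simp [lP]
  | cons v l ih => intro F G; simp only [lP]; rw [ih]; ring

theorem lP_zero (l : List V) :
    lP (fun _ : List (II × V) => (0 : R)) l = 0 := by
  induction l with
  | nil => rfl
  | cons v l ih => simp only [lP]; rw [ih]; simp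

theorem lP_map (f : V → W) (l : List V) : ∀ (F : List (II × W) → R),
    lP (fun l => F (l.map (Prod.map id f))) l = lP F (l.map f) := by
  induction l with
  | nil => intro F; rfl
  | cons v l ih =>
    intro F
    simp only [lP, List.map_cons, Prod.map]
    rw [← ih]
    simp [Function.comp_def, Prod.map]

theorem prism (l : List V) : ∀ (F : List (II × V) → R),
    ld (lP F) l + lP (ld F) l = F (l.map (fun w => (0, w))) + F (l.map (fun w => (1, w))) := by
  induction l with
  | nil => intro F; simp [ld, lP, add_self]
  | cons v l ih =>
    intro F
    simp only [ld, lP, List.map_cons]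
    rw [ld_add, lP_add]
    have h1 := ih (fun l' => F ((0, v) :: l'))
    have h2 := ld_map (fun w : V => ((1 : II), w)) l (fun l' => F ((0, v) :: (1, v) :: l'))
    rw [h2]
    linear_combination h1 + add_self (lP F l) + 
      add_self (ld (fun l' => F ((0, v) :: (1, v) :: l')) (l.map (fun w => ((1:II), w)))) +
      add_self (F ((0, v) :: l.map (fun w => ((1:II), w))))
      
end lists

section subdiv
variable {V : Type*} {W : Type*}

/-- barycentric subdivision with barycenter function `b` -/
def sSn (b : V → List V → V) : ℕ → (List V → R) → List V → R
  | 0, F, _ => F []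
  | _ + 1, F, [] => F []
  | n + 1, F, v :: l => ld (sSn b n (fun l' => F (b v l :: l'))) (v :: l)

def sS (b : V → List V → V) (F : List V → R) (l : List V) : R := sSn b l.length F l

def tTn (b : V → List V → V) : ℕ → (List V → R) → List V → R
  | 0, _, _ => 0
  | _ + 1, _, [] => 0
  | n + 1, F, v :: l => F (b v l :: v :: l) + ld (tTn b n (fun l' => F (b v l :: l'))) (v :: l)

def tT (b : V → List V → V) (F : List V → R) (l : List V) : R := tTn b l.length F l

variable (b : V → List V → V)

theorem sS_nil (F : List V → R) : sS b F [] = F [] := rfl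
theorem tT_nil (F : List V → R) : tT b F [] = 0 := rfl

theorem sS_cons (F : List V → R) (v : V) (l : List V) :
    sS b F (v :: l) = ld (sS b (fun l' => F (b v l :: l'))) (v :: l) := by
  simp only [sS, List.length_cons, sSn]
  apply ld_congr
  intro l' _ h
  simp at h
  show sSn b l.length _ l' = sSn b l'.length _ l'
  rw [h]

theorem tT_cons (F : List V → R) (v : V) (l : List V) :
    tT b F (v :: l) = F (b v l :: v :: l) + ld (tT b (fun l' => F (b v l :: l'))) (v :: l) := by
  simp only [tT, List.length_cons, tTn]
  congr 1
  apply ld_congr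
  intro l' _ h
  simp at h
  show tTn b l.length _ l' = tTn b l'.length _ l'
  rw [h]

/-- induction principle on the length -/
theorem len_ind {P : List V → Prop} (h0 : P [])
    (h : ∀ v l, (∀ l', List.Sublist l' (v :: l) → l'.length = l.length → P l') → P (v :: l)) : ∀ l, P l := by
  intro l
  induction hn : l.length generalizing l with
  | zero => rw [List.length_eq_zero_iff.mp hn]; exact h0
  | succ n ih =>
    cases l with
    | nil => simp at hn
    | cons v l =>
      simp at hn
      exact h v l (fun l' _ hl => ih l' (by omega))

theorem sS_add (l : List V) : ∀ (F G : List V → R),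
    sS b (fun l => F l + G l) l = sS b F l + sS b G l := by
  induction l using len_ind with
  | h0 => intro F G; rfl
  | h v l ih =>
    intro F G
    rw [sS_cons, sS_cons, sS_cons, ← ld_add]
    apply ld_congr
    intro l' h1 h2
    exact ih l' h1 (by simpa using h2) _ _

theorem tT_add (l : List V) : ∀ (F G : List V → R),
    tT b (fun l => F l + G l) l = tT b F l + tT b G l := by
  induction l using len_ind with
  | h0 => intro F G; simp [tT_nil]
  | h v l ih =>
    intro F G
    rw [tT_cons, tT_cons, tT_cons]
    have : ld (tT b fun l' => F (b v l :: l') + G (b v l :: l')) (v :: l) =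
      ld (tT b fun l' => F (b v l :: l')) (v :: l) + ld (tT b fun l' => G (b v l :: l')) (v :: l) := by
      rw [← ld_add]
      apply ld_congr
      intro l' h1 h2
      exact ih l' h1 (by simpa using h2) _ _
    rw [this]; ring

theorem sS_zero (l : List V) : sS b (fun _ => 0) l = 0 := by
  induction l using len_ind with
  | h0 => rfl
  | h v l ih =>
    rw [sS_cons]
    exact (ld_congr _ _ (fun _ => 0) (fun l' h1 h2 => ih l' h1 (by simpa using h2))).trans (ld_zero _)

theorem tT_zero (l : List V) : tT b (fun _ => 0) l = 0 := by
  induction l using len_ind with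
  | h0 => rfl
  | h v l ih =>
    rw [tT_cons, zero_add]
    exact (ld_congr _ _ (fun _ => 0) (fun l' h1 h2 => ih l' h1 (by simpa using h2))).trans (ld_zero _)

theorem sS_map (b' : W → List W → W) (f : V → W) (hf : ∀ v l, f (b v l) = b' (f v) (l.map f))
    (l : List V) : ∀ (F : List W → R),
    sS b (fun l => F (l.map f)) l = sS b' F (l.map f) := by
  induction l using len_ind with
  | h0 => intro F; rfl
  | h v l ih =>
    intro F
    rw [sS_cons, List.map_cons, sS_cons, ← List.map_cons, ← ld_map]
    apply ld_congr
    intro l' h1 h2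
    simp only [List.map_cons, hf]
    exact ih l' h1 (by simpa using h2) (fun l' => F (b' (f v) (l.map f) :: l'))

theorem tT_map (b' : W → List W → W) (f : V → W) (hf : ∀ v l, f (b v l) = b' (f v) (l.map f))
    (l : List V) : ∀ (F : List W → R),
    tT b (fun l => F (l.map f)) l = tT b' F (l.map f) := by
  induction l using len_ind with
  | h0 => intro F; rfl
  | h v l ih =>
    intro F
    have e := tT_cons b' F (f v) (l.map f)
    rw [← List.map_cons, ← ld_map] at e
    rw [tT_cons, e]
    simp only [List.map_cons, hf]
    congr 1
    apply ld_congr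
    intro l' h1 h2
    exact ih l' h1 (by simpa using h2) (fun l' => F (b' (f v) (l.map f) :: l'))

theorem sS_ld (l : List V) : ∀ (F : List V → R), sS b (ld F) l = ld (sS b F) l := by
  induction l using len_ind with
  | h0 => intro F; rfl
  | h v l ih =>
    intro F
    rw [sS_cons]
    simp only [ld.eq_2 F]
    have e : ld (sS b (fun l' => F l' + ld (fun l'' => F (b v l :: l'')) l')) (v :: l) =
        ld (fun l' => sS b F l' + ld (sS b (fun l'' => F (b v l :: l''))) l') (v :: l) := by
      apply ld_congr
      intro l' h1 h2
      rw [sS_add, ih l' h1 (by simpa using h2)]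
    rw [e, ld_add, ld_ld, add_zero]

theorem tT_ld (l : List V) : ∀ (F : List V → R),
    ld (tT b F) l + tT b (ld F) l = F l + sS b F l := by
  induction l using len_ind with
  | h0 => intro F; simp [ld, tT_nil, sS_nil, add_self]
  | h v l ih =>
    intro F
    rw [tT_cons b (ld F)]
    have e : ld (tT b (fun l' => ld F (b v l :: l'))) (v :: l) =
        ld (fun l' => tT b F l' + (F (b v l :: l') + sS b (fun l'' => F (b v l :: l'')) l'
          + ld (tT b (fun l'' => F (b v l :: l''))) l')) (v :: l) := by
      apply ld_congr
      intro l' h1 h2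
      have := ih l' h1 (by simpa using h2) (fun l'' => F (b v l :: l''))
      simp only [ld.eq_2 F]
      rw [tT_add]
      linear_combination this - add_self (ld (tT b (fun l'' => F (b v l :: l''))) l')
    rw [e, ld_add, ld_add, ld_add, ld_ld, ← sS_cons, ld.eq_2 F (b v l)]
    linear_combination add_self (ld (tT b F) (v :: l)) +
       add_self (ld (fun l' => F (b v l :: l')) (v :: l))

/-- iterated homotopy -/
def sSi (n : ℕ) (F : List V → R) : List V → R := (sS b)^[n] F

def Dd (m : ℕ) (F : List V → R) (l : List V) : R := ∑ i ∈ Finset.range m, sSi b i (tT b F) l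

theorem sSi_succ (n : ℕ) (F : List V → R) : sSi b (n+1) F = sS b (sSi b n F) := by
  simp [sSi, Function.iterate_succ_apply']

theorem sSi_nil (n : ℕ) (F : List V → R) : sSi b n F [] = F [] := by
  induction n with
  | zero => rfl
  | succ n ih => rw [sSi_succ, sS_nil, ih]

theorem sSi_add (n : ℕ) (F G : List V → R) :
    sSi b n (fun l => F l + G l) = fun l => sSi b n F l + sSi b n G l := by
  induction n with
  | zero => rfl
  | succ n ih => rw [sSi_succ, ih, sSi_succ, sSi_succ]; funext l; rw [sS_add]

theorem sSi_zero (n : ℕ) : sSi b n (fun _ => 0) = fun _ => 0 := by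
  induction n with
  | zero => rfl
  | succ n ih => rw [sSi_succ, ih]; funext l; rw [sS_zero]

theorem sSi_ld (n : ℕ) (F : List V → R) : sSi b n (ld F) = ld (sSi b n F) := by
  induction n with
  | zero => rfl
  | succ n ih => rw [sSi_succ, ih, sSi_succ]; funext l; rw [sS_ld]

theorem sSi_map (b' : W → List W → W) (f : V → W) (hf : ∀ v l, f (b v l) = b' (f v) (l.map f))
    (n : ℕ) (F : List W → R) :
    sSi b n (fun l => F (l.map f)) = fun l => sSi b' n F (l.map f) := by
  induction n with
  | zero => rfl
  | succ n ih => rw [sSi_succ, ih, sSi_succ]; funext l; rw [sS_map b b' f hf]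

theorem Dd_map (b' : W → List W → W) (f : V → W) (hf : ∀ v l, f (b v l) = b' (f v) (l.map f))
    (n : ℕ) (F : List W → R) (l : List V) :
    Dd b n (fun l => F (l.map f)) l = Dd b' n F (l.map f) := by
  have : tT b (fun l => F (l.map f)) = fun l => tT b' F (l.map f) := by
    funext l; rw [tT_map b b' f hf]
  simp only [Dd, this, sSi_map b b' f hf]

theorem Dd_zero (n : ℕ) (l : List V) : Dd b n (fun _ => 0) l = 0 := by
  have : tT b (fun _ => 0) = fun _ => 0 := by
    funext l; rw [tT_zero]
  simp [Dd, this, sSi_zero]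

theorem Dd_nil (n : ℕ) (F : List V → R) : Dd b n F [] = 0 := by
  simp [Dd, sSi_nil, tT_nil]

theorem Dd_ld (m : ℕ) (F : List V → R) (l : List V) :
    ld (Dd b m F) l + Dd b m (ld F) l = F l + sSi b m F l := by
  induction m with
  | zero =>
    have : ld (Dd b 0 F) l = 0 := by
      have : Dd b 0 F = fun _ => 0 := by funext l; simp [Dd]
      rw [this, ld_zero]
    rw [this]
    simp [Dd, sSi, add_self]
  | succ m ih =>
    have e1 : Dd b (m+1) F = fun l => Dd b m F l + sSi b m (tT b F) l := by
      funext l; simp [Dd, Finset.sum_range_succ]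
    have e2 : Dd b (m+1) (ld F) l = Dd b m (ld F) l + sSi b m (tT b (ld F)) l := by
      simp [Dd, Finset.sum_range_succ]
    rw [e1, e2, ld_add, ← sSi_ld]
    have e3 : sSi b m (ld (tT b F)) l + sSi b m (tT b (ld F)) l = sSi b m F l + sSi b (m+1) F l := by
      have : (fun l => ld (tT b F) l + tT b (ld F) l) = fun l => F l + sS b F l := by
        funext l; exact tT_ld b l F
      have h := congrFun (congrArg (sSi b m) this) l
      rw [sSi_add, sSi_add] at h
      have h5 : sSi b (m+1) F = sSi b m (sS b F) := by simp [sSi]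
      rw [h5]
      exact h
    linear_combination ih + e3 + add_self (sSi b m F l)

end subdiv

end CT

namespace CT

abbrev Δ (N : ℕ) : Type := stdSimplex ℝ (Fin (N + 1))

section affK
variable {E : Type} [AddCommGroup E] [Module ℝ E] [TopologicalSpace E] [IsTopologicalAddGroup E]
  [ContinuousSMul ℝ E] {K : Set E}

def affK (hK : Convex ℝ K) {N : ℕ} (w : Fin (N + 1) → K) : C(Δ N, K) where
  toFun x := ⟨∑ i, x.1 i • (w i : E), hK.sum_mem (fun i _ => x.2.1 i) x.2.2 (fun i _ => (w i).2)⟩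
  continuous_toFun := by
    refine Continuous.subtype_mk (continuous_finsetSum _ fun i _ => ?_) _
    exact ((continuous_apply i).comp continuous_subtype_val).smul continuous_const

theorem affK_coe (hK : Convex ℝ K) {N : ℕ} (w : Fin (N + 1) → K) (x : Δ N) :
    (affK hK w x : E) = ∑ i, x.1 i • (w i : E) := rfl

theorem affK_assoc (hK : Convex ℝ K) {N M : ℕ} (w : Fin (M + 1) → K) (u : Fin (N + 1) → Δ M)
    (x : Δ N) : affK hK w (affK (convex_stdSimplex ℝ _) u x) = affK hK (fun i => affK hK w (u i)) x := by
  apply Subtype.ext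
  rw [affK_coe, affK_coe, affK_coe]
  simp only [affK_coe, Finset.sum_apply, Pi.smul_apply, Finset.smul_sum, Finset.sum_smul, smul_smul,
    smul_eq_mul]
  rw [Finset.sum_comm]

def vtx {N : ℕ} (i : Fin (N + 1)) : Δ N := ⟨Pi.single i 1, single_mem_stdSimplex ℝ i⟩

theorem affK_vtx (hK : Convex ℝ K) {N : ℕ} (w : Fin (N + 1) → K) (i : Fin (N + 1)) :
    affK hK w (vtx i) = w i := by
  apply Subtype.ext
  rw [affK_coe]
  simp [vtx, Pi.single_apply]

theorem affK_const (hK : Convex ℝ K) {N : ℕ} (c : K) (x : Δ N) :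
    affK hK (fun _ => c) x = c := by
  apply Subtype.ext
  rw [affK_coe, ← Finset.sum_smul, x.2.2, one_smul]

end affK

class CvxS (D : Type) [TopologicalSpace D] where
  aff : {N : ℕ} → (Fin (N + 1) → D) → C(Δ N, D)
  assoc : ∀ {N M : ℕ} (w : Fin (M + 1) → D) (u : Fin (N + 1) → Δ M) (x : Δ N),
    aff w (affK (convex_stdSimplex ℝ _) u x) = aff (fun i => aff w (u i)) x
  aff_vtx : ∀ {N : ℕ} (w : Fin (N + 1) → D) (i), aff w (vtx i) = w i
  aff_const : ∀ {N : ℕ} (c : D) (x : Δ N), aff (fun _ => c) x = c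

open CvxS

instance (N : ℕ) : CvxS (Δ N) where
  aff := affK (convex_stdSimplex ℝ _)
  assoc := affK_assoc _
  aff_vtx := affK_vtx _
  aff_const := affK_const _

instance : CvxS II where
  aff := affK (convex_Icc (0 : ℝ) 1)
  assoc := affK_assoc _
  aff_vtx := affK_vtx _
  aff_const := affK_const _

instance {D D' : Type} [TopologicalSpace D] [TopologicalSpace D'] [CvxS D] [CvxS D'] :
    CvxS (D × D') where
  aff w := (aff (fun i => (w i).1)).prodMk (aff (fun i => (w i).2))
  assoc w u x := by
    simp only [ContinuousMap.prod_eval, assoc]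
  aff_vtx w i := by simp only [ContinuousMap.prod_eval, aff_vtx]
  aff_const c x := by simp only [ContinuousMap.prod_eval, aff_const]

variable {D D' : Type} [TopologicalSpace D] [TopologicalSpace D'] [CvxS D] [CvxS D']

def IsAff (α : C(D, D')) : Prop :=
  ∀ (N : ℕ) (u : Fin (N + 1) → D), α.comp (aff u) = aff (fun i => α (u i))

theorem isAff_aff {N : ℕ} (w : Fin (N + 1) → D) : IsAff (aff w) := by
  intro M u
  ext x
  exact assoc w u x

theorem evl_eq {β : Type*} {V : Type*} (Φ : ∀ N : ℕ, (Fin (N + 1) → V) → β) (v : V) (l : List V) (N : ℕ)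
    (u : Fin (N + 1) → V) (h : v :: l = List.ofFn u) :
    Φ l.length (fun i => (v :: l).get i) = Φ N u := by
  have hl : l.length = N := by simpa using congrArg List.length h
  subst hl
  congr 1
  apply List.ofFn_injective
  rw [← h]
  exact List.ofFn_get (v :: l)

theorem exists_ofFn {V : Type*} (v : V) (l : List V) : ∃ u : Fin (l.length + 1) → V,
    v :: l = List.ofFn u := ⟨fun i => (v :: l).get i, (List.ofFn_get (v :: l)).symm⟩

theorem map_ofFn' {V W : Type*} (f : V → W) (N : ℕ) (u : Fin N → V) :
    (List.ofFn u).map f = List.ofFn (fun i => f (u i)) := by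
  rw [List.map_ofFn]; rfl

noncomputable def bar {N : ℕ} : Δ N := stdSimplex.barycenter

noncomputable def bb (v : D) (l : List D) : D := aff (fun i : Fin (l.length + 1) => (v :: l).get i) bar

theorem bb_eq (v : D) (l : List D) (N : ℕ) (u : Fin (N + 1) → D) (h : v :: l = List.ofFn u) :
    bb v l = aff u bar :=
  evl_eq (fun N u => aff u (bar : Δ N)) v l N u h

theorem bb_map (α : C(D, D')) (hα : IsAff α) (v : D) (l : List D) :
    α (bb v l) = bb (α v) (l.map α) := by
  obtain ⟨u, hu⟩ := exists_ofFn v l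
  rw [bb_eq v l _ u hu, bb_eq (α v) (l.map α) _ (fun i => α (u i)), ← hα]
  · rfl
  · rw [← List.map_cons, hu, map_ofFn']

abbrev Cochain (X : Type*) [TopologicalSpace X] := ∀ N : ℕ, C(Δ N, X) → R

section
variable {X Y : Type*} [TopologicalSpace X] [TopologicalSpace Y]

def ev (f : Cochain X) (σ : C(D, X)) : List D → R
  | [] => 0
  | v :: l => f l.length (σ.comp (aff (fun i : Fin (l.length + 1) => (v :: l).get i)))

theorem ev_nil (f : Cochain X) (σ : C(D, X)) : ev f σ [] = 0 := rfl

theorem ev_ofFn (f : Cochain X) (σ : C(D, X)) (N : ℕ) (u : Fin (N + 1) → D) :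
    ev f σ (List.ofFn u) = f N (σ.comp (aff u)) := by
  obtain ⟨v, l, h⟩ : ∃ v l, v :: l = List.ofFn u := by
    rw [List.ofFn_succ]; exact ⟨_, _, rfl⟩
  rw [← h]
  exact evl_eq (fun N u => f N (σ.comp (aff u))) v l N u h

theorem ev_map (f : Cochain X) (σ : C(D', X)) (α : C(D, D')) (hα : IsAff α) (l : List D) :
    ev f (σ.comp α) l = ev f σ (l.map α) := by
  cases l with
  | nil => rfl
  | cons v l =>
    obtain ⟨u, hu⟩ := exists_ofFn v l
    rw [hu, map_ofFn', ev_ofFn, ev_ofFn, ← hα]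
    rfl

def verts (N : ℕ) : List (Δ N) := List.ofFn vtx

theorem verts_len (N : ℕ) : (verts N).length = N + 1 := by simp [verts]

theorem aff_vtx_id (N : ℕ) : aff (vtx : Fin (N+1) → Δ N) = ContinuousMap.id _ := by
  ext x
  apply congrFun
  show (affK (convex_stdSimplex ℝ _) vtx x : Δ N).1 = x.1
  rw [affK_coe]
  funext j
  simp [vtx, Finset.sum_apply, Pi.single_apply]

theorem ev_verts (f : Cochain X) (N : ℕ) (σ : C(Δ N, X)) : ev f σ (verts N) = f N σ := by
  rw [verts, ev_ofFn, aff_vtx_id]; rfl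

theorem map_verts {N : ℕ} (u : Fin (N + 1) → D) : (verts N).map (aff u) = List.ofFn u := by
  rw [verts, map_ofFn']; simp only [aff_vtx]

theorem ev_comp_aff (f : Cochain X) (σ : C(D, X)) {N : ℕ} (u : Fin (N + 1) → D) :
    ev f (σ.comp (aff u)) = fun l => ev f σ (l.map (aff u)) :=
  funext fun l => ev_map f σ _ (isAff_aff u) l

theorem list_cases {D : Type*} {P : List D → Prop} (h0 : P []) (h : ∀ (N : ℕ) (u : Fin (N + 1) → D), P (List.ofFn u))
    (l : List D) : P l := by
  cases l with
  | nil => exact h0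
  | cons v l =>
    obtain ⟨u, hu⟩ := exists_ofFn v l
    rw [hu]; exact h _ _

/-- coboundary -/
def d (f : Cochain X) : Cochain X := fun N σ => ld (ev f σ) (verts N)

theorem ev_d (f : Cochain X) (σ : C(D, X)) (l : List D) : ev (d f) σ l = ld (ev f σ) l := by
  induction l using list_cases with
  | h0 => rfl
  | h N u => rw [ev_ofFn, d, ev_comp_aff, ld_map, map_verts]

def cup (f g : Cochain X) : Cochain X := fun N σ => lcup (ev f σ) (ev g σ) (verts N)

theorem ev_cup (f g : Cochain X) (σ : C(D, X)) (l : List D) :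
    ev (cup f g) σ l = lcup (ev f σ) (ev g σ) l := by
  induction l using list_cases with
  | h0 => rfl
  | h N u => rw [ev_ofFn, cup, ev_comp_aff, ev_comp_aff, lcup_map, map_verts]

theorem ev_add (f g : Cochain X) (σ : C(D, X)) : ev (f + g) σ = fun l => ev f σ l + ev g σ l := by
  funext l; cases l <;> simp [ev]

theorem ev_zero (σ : C(D, X)) : ev (0 : Cochain X) σ = fun _ => 0 := by
  funext l; cases l <;> simp [ev]

theorem ev_smul (c : R) (f : Cochain X) (σ : C(D, X)) : ev (c • f) σ = fun l => c * ev f σ l := by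
  funext l; cases l <;> simp [ev]

theorem d_add (f g : Cochain X) : d (f + g) = d f + d g := by
  funext N σ; simp only [d, ev_add, ld_add, Pi.add_apply]

theorem d_zero : d (0 : Cochain X) = 0 := by
  funext N σ; simp only [d, ev_zero, ld_zero, Pi.zero_apply]

theorem d_smul (c : R) (f : Cochain X) : d (c • f) = c • d f := by
  funext N σ; simp only [d, ev_smul, ld_smul, Pi.smul_apply, smul_eq_mul]

theorem d_d (f : Cochain X) : d (d f) = 0 := by
  funext N σ
  have : ev (d f) σ = ld (ev f σ) := funext fun l => ev_d f σ l
  rw [d, this, ld_ld]; rfl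

theorem cup_add_left (f f' g : Cochain X) : cup (f + f') g = cup f g + cup f' g := by
  funext N σ; simp only [cup, ev_add, lcup_add_left, Pi.add_apply]

theorem cup_add_right (f g g' : Cochain X) : cup f (g + g') = cup f g + cup f g' := by
  funext N σ; simp only [cup, ev_add, lcup_add_right, Pi.add_apply]

theorem cup_zero_left (g : Cochain X) : cup 0 g = 0 := by
  funext N σ; simp only [cup, ev_zero, lcup_zero_left, Pi.zero_apply]

theorem cup_zero_right (g : Cochain X) : cup g 0 = 0 := by
  funext N σ; simp only [cup, ev_zero, lcup_zero_right, Pi.zero_apply]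

theorem cup_smul_left (c : R) (f g : Cochain X) : cup (c • f) g = c • cup f g := by
  funext N σ; simp only [cup, ev_smul, lcup_smul_left, Pi.smul_apply, smul_eq_mul]

theorem d_cup (f g : Cochain X) : d (cup f g) = cup (d f) g + cup f (d g) := by
  funext N σ
  have e1 : ev (cup f g) σ = lcup (ev f σ) (ev g σ) := funext fun l => ev_cup f g σ l
  have e2 : ev (d f) σ = ld (ev f σ) := funext fun l => ev_d f σ l
  have e3 : ev (d g) σ = ld (ev g σ) := funext fun l => ev_d g σ l
  simp only [d, Pi.add_apply, cup]
  have := leibniz (ev g σ) rfl (verts N) (ev f σ)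
  rw [e1, this, ev_nil, zero_mul, add_zero]
  congr 2
  · exact e2.symm
  · exact e3.symm

/-- pullback -/
def pb (φ : C(X, Y)) (f : Cochain Y) : Cochain X := fun N σ => f N (φ.comp σ)

theorem ev_pb (φ : C(X, Y)) (f : Cochain Y) (σ : C(D, X)) : ev (pb φ f) σ = ev f (φ.comp σ) := by
  funext l; cases l <;> rfl

theorem pb_d (φ : C(X, Y)) (f : Cochain Y) : pb φ (d f) = d (pb φ f) := by
  funext N σ; simp only [pb, d]; rw [← ev_pb]

theorem pb_cup (φ : C(X, Y)) (f g : Cochain Y) : pb φ (cup f g) = cup (pb φ f) (pb φ g) := by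
  funext N σ; simp only [pb, cup]; rw [← ev_pb, ← ev_pb]

theorem pb_add (φ : C(X, Y)) (f g : Cochain Y) : pb φ (f + g) = pb φ f + pb φ g := rfl
theorem pb_zero (φ : C(X, Y)) : pb φ (0 : Cochain Y) = 0 := rfl
theorem pb_smul (c : R) (φ : C(X, Y)) (f : Cochain Y) : pb φ (c • f) = c • pb φ f := rfl

theorem pb_comp {Z : Type*} [TopologicalSpace Z] (φ : C(X, Y)) (ψ : C(Y, Z)) (f : Cochain Z) :
    pb (ψ.comp φ) f = pb φ (pb ψ f) := rfl
theorem pb_id (f : Cochain X) : pb (ContinuousMap.id X) f = f := by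
  funext N σ; simp [pb]

/-- unit -/
def one : Cochain X := fun N _ => if N = 0 then 1 else 0

theorem ev_one (σ : C(D, X)) : ev (one : Cochain X) σ = fun l => if l.length = 1 then 1 else 0 := by
  funext l; cases l <;> simp [ev, one]

theorem pb_one (φ : C(X, Y)) : pb φ one = one := rfl

theorem d_one : d (one : Cochain X) = 0 := by
  funext N σ
  simp only [d, ev_one, verts, List.ofFn_succ, ld]
  rcases N with _ | _ | N
  · simp [ld]
  · simp [ld, add_self]
  · simp only [List.ofFn_succ, ld]
    simp [ld_zero]

theorem one_cup (g : Cochain X) : cup one g = g := by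
  funext N σ
  simp only [cup, ev_one]
  rw [lcup_one, if_neg, ev_verts]
  intro h
  have := verts_len N
  rw [h] at this; simp at this

/-- homogeneous -/
def Hom (j : ℕ) (f : Cochain X) : Prop := ∀ N σ, N ≠ j → f N σ = 0

def part (j : ℕ) (f : Cochain X) : Cochain X := fun N σ => if N = j then f N σ else 0

theorem hom_part (j : ℕ) (f : Cochain X) : Hom j (part j f) := fun N σ h => by simp [part, h]

theorem part_of_hom {j : ℕ} {f : Cochain X} (h : Hom j f) : part j f = f := by
  funext N σ; by_cases hN : N = j
  · simp [part, hN]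
  · simp [part, hN, h N σ hN]

theorem hom_ev {j : ℕ} {f : Cochain X} (h : Hom j f) (σ : C(D, X)) (l : List D) (hl : l.length ≠ j + 1) :
    ev f σ l = 0 := by
  cases l with
  | nil => rfl
  | cons v l => exact h _ _ (by simpa using hl)

theorem hom_cup {p q : ℕ} {f g : Cochain X} (hf : Hom p f) (hg : Hom q g) : Hom (p + q) (cup f g) := by
  intro N σ hN
  apply lcup_deg q _ (fun l hl => hom_ev hg σ l hl) _ (p + 1) _ (fun l hl => hom_ev hf σ l hl)
  rw [verts_len]; omega

theorem ev_part (j : ℕ) (f : Cochain X) (σ : C(D, X)) (l : List D) :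
    ev (part j f) σ l = if l.length = j + 1 then ev f σ l else 0 := by
  cases l <;> simp [ev, part]

theorem d_part (j : ℕ) (f : Cochain X) : d (part j f) = part (j + 1) (d f) := by
  funext N σ
  simp only [d, part]
  split_ifs with h
  · apply ld_congr
    intro l _ hl
    rw [verts_len] at hl
    rw [ev_part, if_pos (by omega)]
  · rw [ld_congr _ _ (fun _ => 0), ld_zero]
    intro l _ hl
    rw [verts_len] at hl
    rw [ev_part, if_neg (by omega)]

theorem part_zero_d (f : Cochain X) : part 0 (d f) = 0 := by
  funext N σ
  simp only [part]
  split_ifs with h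
  · subst h
    simp [d, verts, ld, ev_nil]
  · rfl

theorem hom_one : Hom 0 (one : Cochain X) := fun N σ h => by simp [one, h]

theorem hom_add {j : ℕ} {f g : Cochain X} (hf : Hom j f) (hg : Hom j g) : Hom j (f + g) :=
  fun N σ h => by simp [hf N σ h, hg N σ h]
theorem hom_smul {j : ℕ} {f : Cochain X} (c : R) (hf : Hom j f) : Hom j (c • f) :=
  fun N σ h => by simp [hf N σ h]
theorem hom_zero (j : ℕ) : Hom j (0 : Cochain X) := fun _ _ _ => rfl
theorem hom_d {j : ℕ} {f : Cochain X} (hf : Hom j f) : Hom (j + 1) (d f) := by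
  rw [← part_of_hom hf, d_part]; exact hom_part _ _
theorem hom_pb {j : ℕ} (φ : C(X, Y)) {f : Cochain Y} (hf : Hom j f) : Hom j (pb φ f) :=
  fun N _ h => hf N _ h

end

end CT

namespace CT
open CvxS

section shrink
variable {N : ℕ}

def Cvx (K : Set (Δ N)) : Prop :=
  ∀ (M : ℕ) (u : Fin (M + 1) → Δ N), (∀ i, u i ∈ K) → ∀ x, aff u x ∈ K

theorem aff_coe {M : ℕ} (u : Fin (M + 1) → Δ N) (x : Δ M) :
    (aff u x).1 = ∑ i, x.1 i • (u i).1 := rfl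

theorem cvx_of_convex (K : Set (Fin (N + 1) → ℝ)) (hK : Convex ℝ K) :
    Cvx {x : Δ N | x.1 ∈ K} := by
  intro M u hu x
  simp only [Set.mem_ofPred_eq] at *
  rw [aff_coe]
  exact hK.sum_mem (fun i _ => x.2.1 i) x.2.2 (fun i _ => hu i)

theorem cvx_closedBall (p : Δ N) (r : ℝ) : Cvx (Metric.closedBall p r) :=
  cvx_of_convex _ (convex_closedBall p.1 r)

theorem cvx_ball (p : Δ N) (r : ℝ) : Cvx (Metric.ball p r) :=
  cvx_of_convex _ (convex_ball p.1 r)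

theorem cvx_univ : Cvx (Set.univ : Set (Δ N)) := fun _ _ _ _ => trivial

theorem cvx_inter {K L : Set (Δ N)} (hK : Cvx K) (hL : Cvx L) : Cvx (K ∩ L) :=
  fun M u hu x => ⟨hK M u (fun i => (hu i).1) x, hL M u (fun i => (hu i).2) x⟩

theorem bb_mem {K : Set (Δ N)} (hK : Cvx K) (v : Δ N) (l : List (Δ N)) (h : ∀ w ∈ v :: l, w ∈ K) :
    bb v l ∈ K :=
  hK _ _ (fun i => h _ (List.get_mem _ i)) _

theorem sS_van {K : Set (Δ N)} (hK : Cvx K) (l : List (Δ N)) : ∀ (F : List (Δ N) → R),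
    (∀ w ∈ l, w ∈ K) → (∀ l', (∀ w ∈ l', w ∈ K) → F l' = 0) → sS bb F l = 0 := by
  induction l using len_ind with
  | h0 => intro F _ h; exact h [] (by simp)
  | h v l ih =>
    intro F hl hF
    rw [sS_cons, ld_congr _ _ (fun _ => 0), ld_zero]
    intro l' h1 h2
    apply ih l' h1 (by simpa using h2)
    · exact fun w hw => hl w (h1.subset hw)
    · intro l'' h''
      apply hF
      intro w hw
      rcases List.mem_cons.mp hw with rfl | hw
      · exact bb_mem hK v l hl
      · exact h'' w hw

theorem tT_van {K : Set (Δ N)} (hK : Cvx K) (l : List (Δ N)) : ∀ (F : List (Δ N) → R),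
    (∀ w ∈ l, w ∈ K) → (∀ l', (∀ w ∈ l', w ∈ K) → F l' = 0) → tT bb F l = 0 := by
  induction l using len_ind with
  | h0 => intro F _ h; rfl
  | h v l ih =>
    intro F hl hF
    have key : ∀ l'', (∀ w ∈ l'', w ∈ K) → F (bb v l :: l'') = 0 := by
      intro l'' h''
      apply hF
      intro w hw
      rcases List.mem_cons.mp hw with rfl | hw
      · exact bb_mem hK v l hl
      · exact h'' w hw
    rw [tT_cons, ld_congr _ _ (fun _ => 0), ld_zero, key _ hl, add_zero]
    intro l' h1 h2
    exact ih l' h1 (by simpa using h2) _ (fun w hw => hl w (h1.subset hw)) key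

theorem bar_dist {M : ℕ} (u : Fin (M + 1) → Δ N) (δ : ℝ) (hu : ∀ i j, dist (u i) (u j) ≤ δ)
    (j : Fin (M + 1)) : dist (u j) (aff u bar) ≤ M / (M + 1) * δ := by
  have hδ : ∀ i, ‖(u j).1 - (u i).1‖ ≤ δ := fun i => by
    have := hu j i
    rwa [Subtype.dist_eq, dist_eq_norm] at this
  rw [Subtype.dist_eq, dist_eq_norm, aff_coe]
  have hb : ∀ i, (bar : Δ M).1 i = 1 / ((M : ℝ) + 1) := by
    intro i
    have h := stdSimplex.barycenter_apply (𝕜 := ℝ) i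
    simp only [bar]
    refine Eq.trans h ?_
    simp
  have hM : (0 : ℝ) < (M : ℝ) + 1 := by positivity
  have e : (u j).1 - ∑ i, (bar : Δ M).1 i • (u i).1 = ∑ i, (1 / ((M : ℝ) + 1)) • ((u j).1 - (u i).1) := by
    simp only [hb, smul_sub, Finset.sum_sub_distrib, Finset.sum_const, Finset.card_univ, Fintype.card_fin]
    congr 1
    rw [← Nat.cast_smul_eq_nsmul ℝ, smul_smul]
    push_cast
    rw [mul_one_div_cancel hM.ne', one_smul]
  rw [e]
  refine (norm_sum_le _ _).trans ?_
  rw [← Finset.add_sum_erase _ _ (Finset.mem_univ j)]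
  rw [sub_self, smul_zero, norm_zero, zero_add]
  refine (Finset.sum_le_card_nsmul _ _ (1 / ((M : ℝ) + 1) * δ) ?_).trans ?_
  · intro i _
    rw [norm_smul, Real.norm_eq_abs, abs_of_nonneg (by positivity)]
    exact mul_le_mul_of_nonneg_left (hδ i) (by positivity)
  · rw [Finset.card_erase_of_mem (Finset.mem_univ j)]
    simp
    apply le_of_eq
    field_simp

def Pw (l : List (Δ N)) (δ : ℝ) : Prop := ∀ x ∈ l, ∀ y ∈ l, dist x y ≤ δ

theorem bb_dist (v : Δ N) (l : List (Δ N)) (δ : ℝ) (h : Pw (v :: l) δ) (w : Δ N) (hw : w ∈ v :: l) :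
    dist w (bb v l) ≤ l.length / (l.length + 1) * δ := by
  obtain ⟨u, hu⟩ := exists_ofFn v l
  rw [bb_eq v l _ u hu]
  rw [hu] at h hw
  rw [List.mem_ofFn] at hw
  obtain ⟨j, rfl⟩ := hw
  apply bar_dist
  intro i j
  exact h _ (by rw [List.mem_ofFn]; exact ⟨i, rfl⟩) _ (by rw [List.mem_ofFn]; exact ⟨j, rfl⟩)

theorem shrink_aux (n : ℕ) (δ : ℝ) (hδ : 0 ≤ δ) (l : List (Δ N)) : ∀ (F : List (Δ N) → R) (K : Set (Δ N)),
    Cvx K → (∀ w ∈ l, w ∈ K) → l.length ≤ n + 1 → Pw l δ →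
    (∀ l', (∀ w ∈ l', w ∈ K) → l'.length = l.length → Pw l' (n / (n + 1) * δ) → F l' = 0) →
    sS bb F l = 0 := by
  induction l using len_ind with
  | h0 => intro F K _ _ _ _ h; exact h [] (by simp) rfl (by intro x hx; simp at hx)
  | h v l ih =>
    intro F K hK hl hn hP hF
    rw [sS_cons, ld_congr _ _ (fun _ => 0), ld_zero]
    intro l' h1 h2
    have h2' : l'.length = l.length := by simpa using h2
    have hln : l.length ≤ n := by simpa using hn
    have hb : ∀ w ∈ v :: l, dist w (bb v l) ≤ n / (n + 1) * δ := by
      intro w hw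
      refine (bb_dist v l δ hP w hw).trans (mul_le_mul_of_nonneg_right ?_ hδ)
      rw [div_le_div_iff₀ (by positivity) (by positivity)]
      have : (l.length : ℝ) ≤ n := by exact_mod_cast hln
      nlinarith
    apply ih l' h1 h2' _ (K ∩ Metric.closedBall (bb v l) (n / (n + 1) * δ))
      (cvx_inter hK (cvx_closedBall _ _))
    · intro w hw
      have := h1.subset hw
      exact ⟨hl w this, hb w this⟩
    · omega
    · intro x hx y hy
      exact hP x (h1.subset hx) y (h1.subset hy)
    · intro l'' h'' hlen hP''
      apply hF
      · intro w hw
        rcases List.mem_cons.mp hw with rfl | hw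
        · exact bb_mem hK v l hl
        · exact (h'' w hw).1
      · simp; omega
      · intro x hx y hy
        rcases List.mem_cons.mp hx with rfl | hx <;> rcases List.mem_cons.mp hy with rfl | hy
        · rw [dist_self]; positivity
        · rw [dist_comm]; exact (h'' y hy).2
        · exact (h'' x hx).2
        · exact hP'' x hx y hy

def Van (n : ℕ) (δ : ℝ) (F : List (Δ N) → R) : Prop := ∀ l, l.length ≤ n + 1 → Pw l δ → F l = 0

theorem shrink (n : ℕ) (δ : ℝ) (hδ : 0 ≤ δ) (F : List (Δ N) → R) (h : Van n (n / (n + 1) * δ) F) :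
    Van n δ (sS bb F) := by
  intro l hl hP
  apply shrink_aux n δ hδ l F Set.univ cvx_univ (fun _ _ => trivial) hl hP
  intro l' _ h1 h2
  exact h l' (by omega) h2

theorem shrink_iter (n : ℕ) (i : ℕ) : ∀ (δ : ℝ) (_ : 0 ≤ δ) (F : List (Δ N) → R)
    (_ : Van n (((n : ℝ) / (n + 1)) ^ i * δ) F), Van n δ (sSi bb i F) := by
  induction i with
  | zero => intro δ hδ F h; simpa [sSi] using h
  | succ i ih =>
    intro δ hδ F h
    rw [sSi_succ]
    apply shrink n δ hδ
    apply ih _ (by positivity)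
    rwa [← mul_assoc, ← pow_succ]

theorem dist_le_one (x y : Δ N) : dist x y ≤ 1 := by
  rw [Subtype.dist_eq, dist_pi_le_iff zero_le_one]
  intro i
  rw [Real.dist_eq, abs_le]
  have h1 := x.2.1 i
  have h2 := y.2.1 i
  have h3 : x.1 i ≤ 1 := (mem_Icc_of_mem_stdSimplex x.2 i).2
  have h4 : y.1 i ≤ 1 := (mem_Icc_of_mem_stdSimplex y.2 i).2
  constructor <;> linarith

theorem eventually_van (n : ℕ) (δ : ℝ) (hδ : 0 < δ) (F : List (Δ N) → R) (h : Van n δ F) :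
    ∃ m, ∀ i ≥ m, ∀ l, l.length ≤ n + 1 → sSi bb i F l = 0 := by
  have hr0 : 0 ≤ (n : ℝ) / (n + 1) := by positivity
  have hr1 : (n : ℝ) / (n + 1) < 1 := by
    rw [div_lt_one (by positivity)]; linarith
  obtain ⟨m, hm⟩ := exists_pow_lt_of_lt_one hδ hr1
  refine ⟨m, fun i hi l hl => ?_⟩
  apply shrink_iter n i 1 zero_le_one F
  · intro l hl hP
    apply h l hl
    intro x hx y hy
    refine (hP x hx y hy).trans ?_
    rw [mul_one]
    exact (pow_le_pow_of_le_one hr0 hr1.le hi).trans hm.le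
  · exact hl
  · intro x _ y _; exact dist_le_one x y

end shrink

section rel
variable {X : Type*} [TopologicalSpace X]

def EqOn (A : Set X) (f g : Cochain X) : Prop := ∀ N (σ : C(Δ N, X)), (∀ x, σ x ∈ A) → f N σ = g N σ

def Closed (A : Set X) (f : Cochain X) : Prop := EqOn A (d f) 0
def Ex (A : Set X) (f : Cochain X) : Prop := ∃ g, EqOn A f (d g)

theorem EqOn.ev {A : Set X} {f g : Cochain X} (h : EqOn A f g) {D : Type} [TopologicalSpace D] [CvxS D]
    (σ : C(D, X)) (hσ : ∀ x, σ x ∈ A) : ev f σ = ev g σ := by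
  funext l
  cases l with
  | nil => rfl
  | cons v l => exact h _ _ (fun x => hσ _)

theorem EqOn.refl {A : Set X} (f : Cochain X) : EqOn A f f := fun _ _ _ => rfl
theorem EqOn.symm {A : Set X} {f g : Cochain X} (h : EqOn A f g) : EqOn A g f :=
  fun N σ hσ => (h N σ hσ).symm
theorem EqOn.trans {A : Set X} {f g k : Cochain X} (h : EqOn A f g) (h' : EqOn A g k) : EqOn A f k :=
  fun N σ hσ => (h N σ hσ).trans (h' N σ hσ)
theorem EqOn.mono {A B : Set X} (hAB : A ⊆ B) {f g : Cochain X} (h : EqOn B f g) : EqOn A f g :=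
  fun N σ hσ => h N σ (fun x => hAB (hσ x))
theorem EqOn.add {A : Set X} {f g f' g' : Cochain X} (h : EqOn A f g) (h' : EqOn A f' g') :
    EqOn A (f + f') (g + g') := fun N σ hσ => by simp [h N σ hσ, h' N σ hσ]
theorem EqOn.smul {A : Set X} {f g : Cochain X} (c : R) (h : EqOn A f g) :
    EqOn A (c • f) (c • g) := fun N σ hσ => by simp [h N σ hσ]
theorem EqOn.d {A : Set X} {f g : Cochain X} (h : EqOn A f g) : EqOn A (d f) (d g) :=
  fun N σ hσ => by simp only [CT.d]; rw [h.ev σ hσ]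
theorem EqOn.cup {A : Set X} {f g f' g' : Cochain X} (h : EqOn A f g) (h' : EqOn A f' g') :
    EqOn A (cup f f') (cup g g') :=
  fun N σ hσ => by simp only [CT.cup]; rw [h.ev σ hσ, h'.ev σ hσ]
theorem EqOn.part {A : Set X} {f g : Cochain X} (j : ℕ) (h : EqOn A f g) :
    EqOn A (part j f) (part j g) :=
  fun N σ hσ => by simp only [CT.part]; rw [h N σ hσ]
theorem EqOn.of_add {A : Set X} {f g : Cochain X} (h : EqOn A (f + g) 0) : EqOn A f g :=
  fun N σ hσ => eq_of_add_zero (by simpa using h N σ hσ)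

def Pm {N : ℕ} (F : List (Δ N) → R) (m : ℕ) : Prop :=
  ∀ i ≥ m, ∀ l : List (Δ N), l.length ≤ N + 1 → sSi bb i F l = 0 ∧ sSi bb i (tT bb F) l = 0

theorem Pm_exists {A B : Set X} (hA : IsOpen A) (hB : IsOpen B) (f : Cochain X)
    (fA : EqOn A f 0) (fB : EqOn B f 0) {N : ℕ} (σ : C(Δ N, X)) (hσ : ∀ x, σ x ∈ A ∪ B) :
    ∃ m, Pm (ev f σ) m := by
  have hc : IsCompact (Set.univ : Set (Δ N)) := isCompact_univ
  obtain ⟨δ, hδ, hL⟩ := lebesgue_number_lemma_of_metric (c := fun b : Bool => σ ⁻¹' (if b then A else B))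
    hc (fun b => by
      apply IsOpen.preimage σ.continuous
      cases b <;> simp [hA, hB]) (by
      intro x _
      rw [Set.mem_iUnion]
      rcases hσ x with h | h
      · exact ⟨true, by simpa using h⟩
      · exact ⟨false, by simpa using h⟩)
  have key : ∀ p : Δ N, ∀ l : List (Δ N), (∀ w ∈ l, w ∈ Metric.ball p δ) → ev f σ l = 0 := by
    intro p l
    induction l using list_cases with
    | h0 => intro _; rfl
    | h M u =>
      intro hl
      rw [ev_ofFn]
      obtain ⟨b, hb⟩ := hL p trivial
      have : ∀ x, (σ.comp (aff u)) x ∈ (if b then A else B) := by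
        intro x
        exact hb (cvx_ball p δ M u (fun i => hl _ (by rw [List.mem_ofFn]; exact ⟨i, rfl⟩)) x)
      cases b
      · exact fB _ _ (by simpa using this)
      · exact fA _ _ (by simpa using this)
  have h1 : Van N (δ/2) (ev f σ) := by
    intro l _ hP
    cases l with
    | nil => rfl
    | cons v l => exact key v _ (fun w hw => lt_of_le_of_lt (hP w hw v (by simp)) (by linarith))
  have h2 : Van N (δ/2) (tT bb (ev f σ)) := by
    intro l _ hP
    cases l with
    | nil => rfl
    | cons v l =>
      exact tT_van (cvx_ball v δ) _ _ (fun w hw => lt_of_le_of_lt (hP w hw v (by simp)) (by linarith))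
        (key v)
  obtain ⟨m1, hm1⟩ := eventually_van N _ (by positivity) _ h1
  obtain ⟨m2, hm2⟩ := eventually_van N _ (by positivity) _ h2
  exact ⟨max m1 m2, fun i hi l hl => ⟨hm1 i (le_trans (le_max_left _ _) hi) l hl,
    hm2 i (le_trans (le_max_right _ _) hi) l hl⟩⟩

open Classical in
noncomputable def mm {N : ℕ} (F : List (Δ N) → R) : ℕ := if h : ∃ m, Pm F m then Nat.find h else 0

theorem mm_spec {N : ℕ} {F : List (Δ N) → R} (h : ∃ m, Pm F m) : Pm F (mm F) := by
  classical
  rw [mm, dif_pos h]; exact Nat.find_spec h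

theorem mm_le {N : ℕ} {F : List (Δ N) → R} {m : ℕ} (h : Pm F m) : mm F ≤ m := by
  classical
  rw [mm, dif_pos ⟨m, h⟩]; exact Nat.find_min' _ h

theorem Dd_mono {N : ℕ} {F : List (Δ N) → R} {m m' : ℕ} (h : Pm F m) (hm : m ≤ m')
    (l : List (Δ N)) (hl : l.length ≤ N + 1) : Dd bb m F l = Dd bb m' F l := by
  simp only [Dd]
  apply Finset.sum_subset (by simpa using hm)
  intro i _ hi
  exact (h i (by simpa using hi) l hl).2

theorem excision {A B : Set X} (hA : IsOpen A) (hB : IsOpen B) (f : Cochain X)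
    (hf : Closed (A ∪ B) f) (fA : EqOn A f 0) (fB : EqOn B f 0) :
    ∃ g, EqOn (A ∪ B) f (d g) ∧ EqOn A g 0 ∧ EqOn B g 0 := by
  refine ⟨fun N σ => Dd bb (mm (ev f σ)) (ev f σ) (verts N), ?_, ?_, ?_⟩
  · intro N σ hσ
    have hm := mm_spec (Pm_exists hA hB f fA fB σ hσ)
    simp only [d]
    rw [ld_congr _ _ (Dd bb (mm (ev f σ)) (ev f σ))]
    · have h1 := Dd_ld bb (mm (ev f σ)) (ev f σ) (verts N)
      have h2 : ld (ev f σ) = fun _ => 0 := by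
        funext l
        rw [← ev_d, EqOn.ev hf σ hσ, ev_zero]
      rw [h2, Dd_zero, add_zero] at h1
      rw [h1, (hm _ le_rfl _ (verts_len N).le).1, add_zero, ev_verts]
    · intro l _ hl
      induction l using list_cases with
      | h0 => rw [ev_nil, Dd_nil]
      | h M u =>
        rw [ev_ofFn]
        have hN : N = M + 1 := by
          rw [verts_len] at hl; simp at hl; omega
        have hτ := Pm_exists hA hB f fA fB (σ.comp (aff u)) (fun x => hσ _)
        have hP : Pm (ev f (σ.comp (aff u))) (mm (ev f σ)) := by
          intro i hi l hl
          have hbm : ∀ v l, (aff u) (bb v l) = bb ((aff u) v) (l.map (aff u)) :=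
            fun v l => bb_map _ (isAff_aff u) v l
          have := hm i hi (l.map (aff u)) (by simp; omega)
          rw [ev_comp_aff]
          constructor
          · rw [sSi_map bb bb _ hbm]; exact this.1
          · have e : tT bb (fun l => ev f σ (l.map (aff u))) = fun l => tT bb (ev f σ) (l.map (aff u)) := by
              funext l; rw [tT_map bb bb _ hbm]
            rw [e, sSi_map bb bb _ hbm]; exact this.2
        have hle := mm_le hP
        rw [Dd_mono (mm_spec hτ) hle _ (verts_len M).le, ev_comp_aff,
          Dd_map bb bb _ (fun v l => bb_map _ (isAff_aff u) v l), map_verts]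
  · intro N σ hσ
    show Dd bb _ _ _ = 0
    have : ev f σ = fun _ => 0 := by rw [fA.ev σ hσ, ev_zero]
    rw [this, Dd_zero]
  · intro N σ hσ
    show Dd bb _ _ _ = 0
    have : ev f σ = fun _ => 0 := by rw [fB.ev σ hσ, ev_zero]
    rw [this, Dd_zero]

end rel
end CT

namespace CT
open CvxS

section api
variable {X : Type*} [TopologicalSpace X] {A B : Set X} {f g x y z w : Cochain X}

theorem coc_add_self (f : Cochain X) : f + f = 0 := by
  funext N σ; exact add_self _

theorem coc_cancel (f g : Cochain X) : f + (f + g) = g := by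
  rw [← add_assoc, coc_add_self, zero_add]

theorem closed_zero : Closed A (0 : Cochain X) := by rw [Closed, d_zero]; exact EqOn.refl _
theorem closed_one : Closed A (one : Cochain X) := by rw [Closed, d_one]; exact EqOn.refl _
theorem closed_d (g : Cochain X) : Closed A (d g) := by rw [Closed, d_d]; exact EqOn.refl _
theorem Closed.congr (h : EqOn A f g) (hf : Closed A f) : Closed A g := h.symm.d.trans hf
theorem Closed.mono (hAB : A ⊆ B) (h : Closed B f) : Closed A f := EqOn.mono hAB h
theorem Closed.add (h : Closed A f) (h' : Closed A g) : Closed A (f + g) := by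
  have := EqOn.add h h'
  rwa [← d_add, add_zero] at this
theorem Closed.smul (c : R) (h : Closed A f) : Closed A (c • f) := by
  have := EqOn.smul c h
  rwa [← d_smul, smul_zero] at this
theorem Closed.part (j : ℕ) (h : Closed A f) : Closed A (part j f) := by
  rw [Closed, d_part]
  refine (EqOn.part _ h).trans ?_
  intro N σ _; simp [CT.part]
theorem Closed.cup (h : Closed A f) (h' : Closed A g) : Closed A (cup f g) := by
  rw [Closed, d_cup]
  have h1 := (EqOn.cup h (EqOn.refl (A := A) g)).add (EqOn.cup (EqOn.refl (A := A) f) h')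
  rwa [cup_zero_left, cup_zero_right, add_zero] at h1

theorem ex_zero : Ex A (0 : Cochain X) := ⟨0, by rw [d_zero]; exact EqOn.refl _⟩
theorem ex_d (g : Cochain X) : Ex A (d g) := ⟨g, EqOn.refl _⟩
theorem ex_of_eq0 (h : EqOn A f 0) : Ex A f := ⟨0, by rwa [d_zero]⟩
theorem Ex.congr (h : EqOn A f g) (hf : Ex A f) : Ex A g := let ⟨k, hk⟩ := hf; ⟨k, h.symm.trans hk⟩
theorem Ex.mono (hAB : A ⊆ B) (h : Ex B f) : Ex A f := let ⟨k, hk⟩ := h; ⟨k, hk.mono hAB⟩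
theorem Ex.add (h : Ex A f) (h' : Ex A g) : Ex A (f + g) := by
  obtain ⟨k, hk⟩ := h
  obtain ⟨k', hk'⟩ := h'
  exact ⟨k + k', by rw [d_add]; exact hk.add hk'⟩
theorem Ex.smul (c : R) (h : Ex A f) : Ex A (c • f) := by
  obtain ⟨k, hk⟩ := h
  exact ⟨c • k, by rw [d_smul]; exact hk.smul c⟩
theorem Ex.closed (h : Ex A f) : Closed A f := by
  obtain ⟨k, hk⟩ := h
  exact (closed_d k).congr hk.symm
theorem Ex.of_add (h : Ex A (f + g)) (hf : Ex A f) : Ex A g := by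
  have := hf.add h
  rwa [coc_cancel] at this
theorem Ex.of_add' (h : Ex A (f + g)) (hg : Ex A g) : Ex A f := by
  rw [add_comm] at h; exact h.of_add hg
theorem ex_part0 (h : Ex A f) : EqOn A (part 0 f) 0 := by
  obtain ⟨k, hk⟩ := h
  have := EqOn.part 0 hk
  rwa [part_zero_d] at this
theorem Ex.hom0 (h : Ex A f) (hf : Hom 0 f) : EqOn A f 0 := by
  have := ex_part0 h
  rwa [part_of_hom hf] at this
theorem Ex.homS {j : ℕ} (h : Ex A f) (hf : Hom (j + 1) f) : ∃ k, Hom j k ∧ EqOn A f (d k) := by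
  obtain ⟨k, hk⟩ := h
  refine ⟨CT.part j k, hom_part _ _, ?_⟩
  have := EqOn.part (j + 1) hk
  rwa [part_of_hom hf, ← d_part] at this
theorem Ex.part (j : ℕ) (h : Ex A f) : Ex A (part j f) := by
  cases j with
  | zero => exact ex_of_eq0 (ex_part0 h)
  | succ j =>
    obtain ⟨k, hk⟩ := h
    exact ⟨CT.part j k, by rw [d_part]; exact hk.part _⟩
theorem Ex.cup_left (h : Ex A f) (hg : Closed A g) : Ex A (cup f g) := by
  obtain ⟨k, hk⟩ := h
  refine ⟨cup k g, ?_⟩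
  rw [d_cup]
  have := (EqOn.cup hk (EqOn.refl (A := A) g)).add (EqOn.cup (EqOn.refl (A := A) k) hg).symm
  rwa [cup_zero_right, add_zero] at this
theorem Ex.cup_right (hf : Closed A f) (h : Ex A g) : Ex A (cup f g) := by
  obtain ⟨k, hk⟩ := h
  refine ⟨cup f k, ?_⟩
  rw [d_cup]
  have := (EqOn.cup hf (EqOn.refl (A := A) k)).symm.add (EqOn.cup (EqOn.refl (A := A) f) hk)
  rwa [cup_zero_left, zero_add] at this

theorem one_empty : EqOn (∅ : Set X) f g := fun _ _ h => (h (vtx 0)).elim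

open Classical in
theorem glue (h : EqOn (A ∩ B) f g) : ∃ G, EqOn A G f ∧ EqOn B G g := by
  refine ⟨fun N σ => if ∀ x, σ x ∈ A then f N σ else g N σ, ?_, ?_⟩
  · intro N σ hσ; simp [hσ]
  · intro N σ hσ
    by_cases hA : ∀ x, σ x ∈ A
    · simp only [hA, implies_true, if_true]
      exact h N σ (fun x => ⟨hA x, hσ x⟩)
    · simp only [hA, if_false]

theorem glue_res (A : Set X) (f : Cochain X) : ∃ G, EqOn A G f := ⟨f, EqOn.refl _⟩

/-- exactness on a union -/
theorem mv_ex (hA : IsOpen A) (hB : IsOpen B) {a b h : Cochain X} (hf : Closed (A ∪ B) f)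
    (ha : EqOn A f (d a)) (hb : EqOn B f (d b)) (hh : EqOn (A ∩ B) (a + b) (d h)) : Ex (A ∪ B) f := by
  have h1 : EqOn (A ∩ B) a (b + d h) := by
    intro N σ hσ
    have := hh N σ hσ
    simp only [Pi.add_apply] at *
    linear_combination this - add_self (b N σ)
  obtain ⟨G, GA, GB⟩ := glue h1
  have fA : EqOn A (f + d G) 0 := by
    have := ha.add GA.d
    rwa [coc_add_self] at this
  have fB : EqOn B (f + d G) 0 := by
    have := hb.add GB.d
    rwa [d_add, d_d, add_zero, coc_add_self] at this
  obtain ⟨k, hk, -, -⟩ := excision hA hB (f + d G) (hf.add (closed_d G)) fA fB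
  exact Ex.of_add' ⟨k, hk⟩ (ex_d G)

theorem mv_glue (hA : IsOpen A) (hB : IsOpen B) (hf : Closed A f) (hg : Closed B g)
    (hfg : EqOn (A ∩ B) f g) : ∃ y, Closed (A ∪ B) y ∧ EqOn A y f ∧ EqOn B y g := by
  obtain ⟨G, GA, GB⟩ := glue hfg
  obtain ⟨k, hk, kA, kB⟩ := excision hA hB (d G) (closed_d G) (hf.congr GA.symm) (hg.congr GB.symm)
  refine ⟨G + k, ?_, ?_, ?_⟩
  · have : EqOn (A ∪ B) (d G + d k) (d k + d k) := hk.add (EqOn.refl _)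
    rwa [coc_add_self, ← d_add] at this
  · have := GA.add kA
    rwa [add_zero] at this
  · have := GB.add kB
    rwa [add_zero] at this

theorem mv_glue_hom (hA : IsOpen A) (hB : IsOpen B) {j : ℕ} (hjf : Hom j f) (hjg : Hom j g)
    (hf : Closed A f) (hg : Closed B g)
    (hfg : EqOn (A ∩ B) f g) : ∃ y, Hom j y ∧ Closed (A ∪ B) y ∧ EqOn A y f ∧ EqOn B y g := by
  obtain ⟨y, hy, yA, yB⟩ := mv_glue hA hB hf hg hfg
  refine ⟨part j y, hom_part _ _, hy.part j, ?_, ?_⟩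
  · have := yA.part j
    rwa [part_of_hom hjf] at this
  · have := yB.part j
    rwa [part_of_hom hjg] at this

/-- gluing up to exactness on the intersection -/
theorem mv_glue_ex (hA : IsOpen A) (hB : IsOpen B) {j : ℕ} (hjf : Hom j f) (hjg : Hom j g)
    (hf : Closed A f) (hg : Closed B g)
    (hfg : Ex (A ∩ B) (f + g)) : ∃ y, Hom j y ∧ Closed (A ∪ B) y ∧ EqOn A y f ∧ Ex B (y + g) := by
  obtain ⟨h, hh⟩ := hfg.part j
  rw [part_of_hom (hom_add hjf hjg)] at hh
  have h1 : EqOn (A ∩ B) f (g + d h) := by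
    intro N σ hσ
    have := hh N σ hσ
    simp only [Pi.add_apply] at *
    linear_combination this - add_self (g N σ)
  obtain ⟨y, hy, yA, yB⟩ := mv_glue hA hB hf (hg.add (closed_d h)) h1
  refine ⟨part j y, hom_part _ _, hy.part j, ?_, ?_⟩
  · have := yA.part j
    rwa [part_of_hom hjf] at this
  · have : Ex B (y + g) := ⟨h, by
      have := yB.add (EqOn.refl (A := B) g)
      rwa [add_comm g, add_assoc, coc_add_self, add_zero] at this⟩
    have := this.part j
    have e : part j (y + g) = part j y + part j g := by
      funext N σ; simp only [part, Pi.add_apply]; split_ifs <;> simp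
    rwa [e, part_of_hom hjg] at this

open Classical in
theorem mv_prod (hA : IsOpen A) (hB : IsOpen B) (hx : Closed (A ∪ B) x) (hy : Closed (A ∪ B) y)
    (xA : Ex A x) (yB : Ex B y) : Ex (A ∪ B) (cup x y) := by
  obtain ⟨a, ha⟩ := xA
  obtain ⟨b, hb⟩ := yB
  have h1 : EqOn A (x + d a) 0 := by
    have := ha.add (EqOn.refl (A := A) (d a)); rwa [coc_add_self] at this
  have h2 : EqOn B (y + d b) 0 := by
    have := hb.add (EqOn.refl (A := B) (d b)); rwa [coc_add_self] at this
  have hx' : Closed (A ∪ B) (x + d a) := hx.add (closed_d a)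
  have hy' : Closed (A ∪ B) (y + d b) := hy.add (closed_d b)
  have e1 : EqOn A (cup (x + d a) (y + d b)) 0 := by
    have := h1.cup (EqOn.refl (A := A) (y + d b)); rwa [cup_zero_left] at this
  have e2 : EqOn B (cup (x + d a) (y + d b)) 0 := by
    have := (EqOn.refl (A := B) (x + d a)).cup h2; rwa [cup_zero_right] at this
  obtain ⟨k, hk, -, -⟩ := excision hA hB _ (hx'.cup hy') e1 e2
  have h3 : Ex (A ∪ B) (cup (x + d a) (y + d b)) := ⟨k, hk⟩
  rw [cup_add_right] at h3
  have h4 := h3.of_add' (Ex.cup_right hx' (ex_d b))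
  rw [cup_add_left] at h4
  exact h4.of_add' ((ex_d a).cup_left hy)

/-- connecting relation -/
def DD (A B : Set X) (z w : Cochain X) : Prop :=
  ∃ a b, EqOn A w (d a) ∧ EqOn B w (d b) ∧ EqOn (A ∩ B) (a + b) z

theorem DD.exists (hA : IsOpen A) (hB : IsOpen B) {j : ℕ} (hj : Hom j z) (hz : Closed (A ∩ B) z) :
    ∃ w, Hom (j + 1) w ∧ Closed (A ∪ B) w ∧ DD A B z w := by
  obtain ⟨w, h1, h2, h3, h4⟩ := mv_glue_hom hA hB (hom_d hj) (hom_zero (j + 1)) (closed_d z) closed_zero hz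
  exact ⟨w, h1, h2, z, 0, h3, by rwa [d_zero], by rw [add_zero]; exact EqOn.refl _⟩

theorem DD.split {j : ℕ} (hj : Hom j z) (h : DD A B z w) (hw : Ex (A ∪ B) w) :
    ∃ a b, Hom j a ∧ Hom j b ∧ Closed A a ∧ Closed B b ∧ EqOn (A ∩ B) (a + b) z := by
  obtain ⟨a, b, h1, h2, h3⟩ := h
  obtain ⟨g, hg⟩ := hw
  have ca : Closed A (a + g) := by
    have := h1.symm.add (hg.mono Set.subset_union_left).symm
    rw [Closed, d_add]
    rwa [coc_add_self] at this
  have cb : Closed B (b + g) := by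
    have := h2.symm.add (hg.mono Set.subset_union_right).symm
    rw [Closed, d_add]
    rwa [coc_add_self] at this
  refine ⟨part j (a + g), part j (b + g), hom_part _ _, hom_part _ _, ca.part j, cb.part j, ?_⟩
  have h4 := h3.part j
  rw [part_of_hom hj] at h4
  refine EqOn.trans ?_ h4
  intro N σ _
  simp only [part, Pi.add_apply]
  split_ifs
  · linear_combination add_self (g N σ)
  · simp

theorem DD.ex (hA : IsOpen A) (hB : IsOpen B) (h : DD A B z w) (hw : Closed (A ∪ B) w)
    (hz : Ex (A ∩ B) z) : Ex (A ∪ B) w := by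
  obtain ⟨a, b, h1, h2, h3⟩ := h
  obtain ⟨k, hk⟩ := hz
  exact mv_ex hA hB hw h1 h2 (h3.trans hk)

theorem DD.of_ex {j : ℕ} (hj : Hom (j + 1) w) (wA : Ex A w) (wB : Ex B w) :
    ∃ z, Hom j z ∧ Closed (A ∩ B) z ∧ DD A B z w := by
  obtain ⟨a, ja, ha⟩ := wA.homS hj
  obtain ⟨b, jb, hb⟩ := wB.homS hj
  refine ⟨a + b, hom_add ja jb, ?_, a, b, ha, hb, EqOn.refl _⟩
  have := (ha.mono (Set.inter_subset_left (t := B))).symm.add (hb.mono (Set.inter_subset_right (s := A))).symm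
  rwa [coc_add_self, ← d_add] at this

theorem DD.cup (h : DD A B z w) (xA : Closed A x) (xB : Closed B x) : DD A B (cup z x) (cup w x) := by
  obtain ⟨a, b, h1, h2, h3⟩ := h
  refine ⟨CT.cup a x, CT.cup b x, ?_, ?_, ?_⟩
  · rw [d_cup]
    have := (h1.cup (EqOn.refl (A := A) x)).add (EqOn.cup (EqOn.refl (A := A) a) xA).symm
    rwa [cup_zero_right, add_zero] at this
  · rw [d_cup]
    have := (h2.cup (EqOn.refl (A := B) x)).add (EqOn.cup (EqOn.refl (A := B) b) xB).symm
    rwa [cup_zero_right, add_zero] at this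
  · rw [← cup_add_left]
    exact h3.cup (EqOn.refl x)

theorem DD.add {z' w' : Cochain X} (h : DD A B z w) (h' : DD A B z' w') : DD A B (z + z') (w + w') := by
  obtain ⟨a, b, h1, h2, h3⟩ := h
  obtain ⟨a', b', h1', h2', h3'⟩ := h'
  refine ⟨a + a', b + b', ?_, ?_, ?_⟩
  · rw [d_add]; exact h1.add h1'
  · rw [d_add]; exact h2.add h2'
  · have := h3.add h3'
    intro N σ hσ
    have := this N σ hσ
    simp only [Pi.add_apply] at *
    rw [← this]; ring

theorem DD.exA (h : DD A B z w) : Ex A w := let ⟨a, _, h1, _⟩ := h; ⟨a, h1⟩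
theorem DD.exB (h : DD A B z w) : Ex B w := let ⟨_, b, _, h1, _⟩ := h; ⟨b, h1⟩

theorem DD.smul (c : R) (h : DD A B z w) : DD A B (c • z) (c • w) := by
  obtain ⟨a, b, h1, h2, h3⟩ := h
  refine ⟨c • a, c • b, ?_, ?_, ?_⟩
  · rw [d_smul]; exact h1.smul c
  · rw [d_smul]; exact h2.smul c
  · have := h3.smul c
    rwa [smul_add] at this

def RE (A : Set X) (f : Cochain X) : Prop := ∃ c : R, Ex A (f + c • one)

theorem RE.mono (hAB : A ⊆ B) (h : RE B f) : RE A f := let ⟨c, hc⟩ := h; ⟨c, hc.mono hAB⟩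
theorem Ex.re (h : Ex A f) : RE A f := ⟨0, by simpa using h⟩
theorem RE.pos {j : ℕ} (hj : Hom (j + 1) f) (h : RE A f) : Ex A f := by
  obtain ⟨c, hc⟩ := h
  have := hc.part (j + 1)
  have e : CT.part (j + 1) (f + c • one) = f := by
    funext N σ
    simp only [part, Pi.add_apply, Pi.smul_apply, one]
    split_ifs with h1 h2
    · omega
    · simp
    · exact (hj N σ h1).symm
  rwa [e] at this
theorem RE.zero (hj : Hom 0 f) (h : RE A f) : ∃ c : R, EqOn A f (c • one) := by
  obtain ⟨c, hc⟩ := h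
  exact ⟨c, (hc.hom0 (hom_add hj (hom_smul c hom_one))).of_add⟩
theorem re_of_eq {c : R} (h : EqOn A f (c • one)) : RE A f := by
  refine ⟨c, ex_of_eq0 ?_⟩
  have := h.add (EqOn.refl (A := A) (c • one))
  rwa [coc_add_self] at this

end api

section homotopy
variable {X X' Y : Type*} [TopologicalSpace X] [TopologicalSpace X'] [TopologicalSpace Y]

theorem pb_eq_of_eqOn {A : Set X} {f g : Cochain X} (h : EqOn A f g) (φ : C(Y, X)) (hφ : ∀ y, φ y ∈ A) :
    pb φ f = pb φ g := by
  funext N σ; exact h N _ (fun x => hφ _)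

theorem Ex.pb {A : Set X} {f : Cochain X} (h : Ex A f) (φ : C(Y, X)) (B : Set Y) (hφ : ∀ y ∈ B, φ y ∈ A) :
    Ex B (pb φ f) := by
  obtain ⟨k, hk⟩ := h
  refine ⟨CT.pb φ k, ?_⟩
  rw [← pb_d]
  intro N σ hσ
  exact hk N _ (fun x => hφ _ (hσ x))

theorem Closed.pb {A : Set X} {f : Cochain X} (h : Closed A f) (φ : C(Y, X)) (B : Set Y)
    (hφ : ∀ y ∈ B, φ y ∈ A) : Closed B (pb φ f) := by
  rw [Closed, ← pb_d]
  intro N σ hσ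
  exact h N _ (fun x => hφ _ (hσ x))

def inc (A : Set X) : C(A, X) := ⟨Subtype.val, continuous_subtype_val⟩

open Classical in
noncomputable def extn (A : Set X) (g : Cochain A) : Cochain X := fun N σ =>
  if h : ∀ x, σ x ∈ A then g N ⟨fun x => ⟨σ x, h x⟩, by fun_prop⟩ else 0

theorem pb_extn (A : Set X) (g : Cochain A) : pb (inc A) (extn A g) = g := by
  funext N σ
  simp only [pb, extn]
  have h : ∀ x, ((inc A).comp σ) x ∈ A := fun x => (σ x).2
  rw [dif_pos h]
  rfl

theorem eqOn_iff_pb {A : Set X} {f g : Cochain X} : EqOn A f g ↔ pb (inc A) f = pb (inc A) g := by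
  constructor
  · intro h; exact pb_eq_of_eqOn h _ (fun y => y.2)
  · intro h N σ hσ
    exact congrFun (congrFun h N) ⟨fun x => ⟨σ x, hσ x⟩, by fun_prop⟩

theorem eqOn_univ {f g : Cochain X} : EqOn Set.univ f g ↔ f = g :=
  ⟨fun h => funext fun N => funext fun σ => h N σ (fun _ => trivial), fun h => h ▸ EqOn.refl _⟩

theorem ex_iff_pb {A : Set X} {f : Cochain X} : Ex A f ↔ Ex Set.univ (pb (inc A) f) := by
  constructor
  · intro h; exact h.pb _ _ (fun y _ => y.2)
  · rintro ⟨k, hk⟩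
    refine ⟨extn A k, ?_⟩
    rw [eqOn_iff_pb, pb_d, pb_extn]
    exact eqOn_univ.mp hk

theorem closed_iff_pb {A : Set X} {f : Cochain X} : Closed A f ↔ Closed Set.univ (pb (inc A) f) := by
  rw [Closed, Closed, eqOn_iff_pb, eqOn_univ, pb_d]; rfl

theorem closed_extn {A : Set X} {g : Cochain A} (h : Closed Set.univ g) : Closed A (extn A g) := by
  rw [closed_iff_pb, pb_extn]; exact h

theorem hom_extn {A : Set X} {g : Cochain A} {j : ℕ} (h : Hom j g) : Hom j (extn A g) := by
  intro N σ hN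
  simp only [extn]
  split_ifs
  · exact h N _ hN
  · rfl

def hK (H : C(II × X', X)) (f : Cochain X) : Cochain X' := fun N σ =>
  lP (ev f (H.comp ((ContinuousMap.id II).prodMap σ))) (verts N)

theorem isAff_prod {N : ℕ} {D : Type} [TopologicalSpace D] [CvxS D] (u : Fin (N + 1) → D) :
    IsAff ((ContinuousMap.id II).prodMap (aff u)) := by
  intro M w
  ext x
  · rfl
  · exact DFunLike.congr_fun (isAff_aff u M (fun i => (w i).2)) x

theorem isAff_inc {D : Type} [TopologicalSpace D] [CvxS D] (t : II) :
    IsAff ((ContinuousMap.const D t).prodMk (ContinuousMap.id D)) := by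
  intro M w
  ext x
  · exact congrArg Subtype.val (aff_const t x).symm
  · rfl

theorem ev_hK (H : C(II × X', X)) (f : Cochain X) {M : ℕ} (σ : C(Δ M, X')) (l : List (Δ M)) :
    ev (hK H f) σ l = lP (ev f (H.comp ((ContinuousMap.id II).prodMap σ))) l := by
  induction l using list_cases with
  | h0 => rfl
  | h N u =>
    rw [ev_ofFn, hK]
    have e : H.comp ((ContinuousMap.id II).prodMap (σ.comp (aff u))) =
      (H.comp ((ContinuousMap.id II).prodMap σ)).comp ((ContinuousMap.id II).prodMap (aff u)) := rfl
    rw [e]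
    have e2 : ev f ((H.comp ((ContinuousMap.id II).prodMap σ)).comp ((ContinuousMap.id II).prodMap (aff u)))
      = fun l => ev f (H.comp ((ContinuousMap.id II).prodMap σ)) (l.map (Prod.map id (aff u))) := by
      funext l; exact ev_map f _ _ (isAff_prod u) l
    rw [e2, lP_map, map_verts]

theorem hK_d (H : C(II × X', X)) (f : Cochain X) (N : ℕ) (σ : C(Δ N, X')) :
    d (hK H f) N σ + hK H (d f) N σ =
      f N (H.comp ((ContinuousMap.const _ 0).prodMk σ)) + f N (H.comp ((ContinuousMap.const _ 1).prodMk σ)) := by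
  have e1 : ev (hK H f) σ = lP (ev f (H.comp ((ContinuousMap.id II).prodMap σ))) :=
    funext fun l => ev_hK H f σ l
  have e2 : ev (d f) (H.comp ((ContinuousMap.id II).prodMap σ)) =
    ld (ev f (H.comp ((ContinuousMap.id II).prodMap σ))) := funext fun l => ev_d _ _ _
  have key : ∀ t : II, ev f (H.comp ((ContinuousMap.id II).prodMap σ)) ((verts N).map (fun w => (t, w))) =
      f N (H.comp ((ContinuousMap.const _ t).prodMk σ)) := by
    intro t
    have := ev_map f (H.comp ((ContinuousMap.id II).prodMap σ)) _ (isAff_inc (D := Δ N) t) (verts N)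
    rw [ev_verts] at this
    exact this.symm
  simp only [d, hK]
  rw [e1, e2, prism, key, key]

theorem homotopy_ex {f0 f1 : C(X', X)} (H : f0.Homotopy f1) {A : Set X} (hH : ∀ p, H p ∈ A) {c : Cochain X}
    (hc : Closed A c) : Ex Set.univ (pb f0 c + pb f1 c) := by
  refine ⟨hK H.toContinuousMap c, ?_⟩
  rw [eqOn_univ]
  funext N σ
  have h := hK_d H.toContinuousMap c N σ
  have h0 : hK H.toContinuousMap (d c) N σ = 0 := by
    have : ev (d c) (H.toContinuousMap.comp ((ContinuousMap.id II).prodMap σ)) = fun _ => 0 := by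
      rw [EqOn.ev hc _ (fun x => hH _), ev_zero]
    simp only [hK, this, lP_zero]
  rw [h0, add_zero] at h
  rw [h]
  simp only [Pi.add_apply, pb]
  congr 2 <;> (ext x; simp)

theorem homotopic_ex {f0 f1 : C(X', X)} (H : f0.Homotopic f1) {c : Cochain X}
    (hc : Closed Set.univ c) : Ex Set.univ (pb f0 c + pb f1 c) :=
  H.elim fun H => homotopy_ex (A := Set.univ) H (fun _ => trivial) hc

theorem ld_len (a : R) {V : Type*} (l : List V) : ∀ k : ℕ,
    ld (fun l : List V => if l.length = k then a else 0) l = if l.length = k + 1 then (l.length : R) * a else 0 := by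
  induction l with
  | nil => intro k; simp [ld]
  | cons v l ih =>
    intro k
    simp only [ld, List.length_cons]
    cases k with
    | zero =>
      simp only [Nat.add_eq_zero_iff, one_ne_zero, and_false, if_false, ld_zero, add_zero, zero_add,
        Nat.add_eq_right]
      split_ifs with h <;> simp [h]
    | succ k =>
      simp only [Nat.add_right_cancel_iff]
      rw [ih]
      split_ifs with h
      · push_cast; ring
      · simp

/-- a cochain constant in each degree -/
theorem const_ex {j : ℕ} (a : R) (f : Cochain X) (x0 : X)
    (hf : ∀ N σ, f N σ = if N = j + 1 then a else 0) (hc : Closed Set.univ f) : Ex Set.univ f := by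
  by_cases hj : Even (j + 1)
  · refine ⟨fun N σ => if N = j then a else 0, ?_⟩
    rw [eqOn_univ]
    funext N σ
    have : ev (fun N (σ : C(Δ N, X)) => if N = j then a else 0) σ = fun l => if l.length = j + 1 then a else 0 := by
      funext l; cases l <;> simp [ev]
    rw [d, this, ld_len, verts_len, hf]
    simp only [Nat.add_right_cancel_iff]
    split_ifs with h
    · subst h
      obtain ⟨m, hm⟩ := hj
      rw [hm]; push_cast
      have : (m : R) + m = 0 := add_self _
      linear_combination -a * this
    · rfl
  · have h := eqOn_univ.mp hc
    have h := congrFun (congrFun h (j + 2)) (ContinuousMap.const _ x0)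
    have : ev f (ContinuousMap.const (Δ (j+2)) x0) = fun l => if l.length = j + 2 then a else 0 := by
      funext l; cases l <;> simp [ev, hf]
    rw [d, this, ld_len, verts_len, if_pos rfl] at h
    rw [Nat.not_even_iff_odd] at hj
    obtain ⟨m, hm⟩ := hj
    have e : ((j + 2 + 1 : ℕ) : R) = 1 := by
      have : j + 2 + 1 = (m + m) + (1 + 1 + 1) := by omega
      rw [this]; push_cast
      rw [add_self]; decide
    rw [e, one_mul] at h
    apply ex_of_eq0
    intro N σ _
    rw [hf, show a = 0 from h]; simp

theorem contr_re {C : Set X} [ContractibleSpace C] {j : ℕ} {f : Cochain X} (hj : Hom j f) (hf : Closed C f) :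
    RE C f := by
  obtain ⟨p, hp⟩ := id_nullhomotopic C
  have hf' := closed_iff_pb.mp hf
  have h := homotopic_ex hp hf'
  rw [pb_id] at h
  have hj' := hom_pb (inc C) hj
  set f' := pb (inc C) f with hf'd
  let a : R := f' j (ContinuousMap.const _ p)
  have hv : ∀ N σ, (pb (ContinuousMap.const _ p) f' : Cochain C) N σ = if N = j then a else 0 := by
    intro N σ
    split_ifs with hN
    · subst hN; rfl
    · exact hj' _ _ hN
  cases j with
  | zero =>
    have e : (pb (ContinuousMap.const _ p) f' : Cochain C) = a • one := by
      funext N σ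
      rw [hv]
      simp [one]
    rw [e] at h
    refine ⟨a, ?_⟩
    rw [ex_iff_pb]
    exact h
  | succ j =>
    have h2 : Ex Set.univ (pb (ContinuousMap.const _ p) f' : Cochain C) :=
      const_ex a _ p hv (hf'.pb _ _ (fun _ _ => trivial))
    exact (ex_iff_pb.mpr (h.of_add' h2)).re

theorem contr_ex {C : Set X} [ContractibleSpace C] {j : ℕ} {f : Cochain X} (hj : Hom (j + 1) f) (hf : Closed C f) :
    Ex C f := (contr_re hj hf).pos hj

end homotopy
end CT

set_option linter.unusedSectionVars false

namespace CT
open CvxS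

section nerve
variable {X : Type*} [TopologicalSpace X]

theorem eqOn_union0 {A B : Set X} {f g : Cochain X} (hf : Hom 0 f) (hg : Hom 0 g)
    (hA : EqOn A f g) (hB : EqOn B f g) : EqOn (A ∪ B) f g := by
  intro N σ hσ
  by_cases hN : N = 0
  · subst hN
    have hs : ∀ x : Δ 0, x = vtx 0 := fun x => by
      apply Subtype.ext
      funext i
      have h1 := x.2.2
      have h2 := (vtx 0 : Δ 0).2.2
      have hi : i = 0 := Fin.fin_one_eq_zero i
      subst hi
      simp only [Nat.reduceAdd, Finset.univ_unique, Fin.default_eq_zero, Finset.sum_singleton] at h1 h2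
      exact h1.trans h2.symm
    rcases hσ (vtx 0) with h | h
    · exact hA 0 σ (fun x => by rw [hs x]; exact h)
    · exact hB 0 σ (fun x => by rw [hs x]; exact h)
  · rw [hf N σ hN, hg N σ hN]

theorem DD.add_one {A B : Set X} {z w : Cochain X} (h : DD A B z w) (c : R) : DD A B (z + c • one) w := by
  obtain ⟨a, b, h1, h2, h3⟩ := h
  refine ⟨a + c • one, b, ?_, h2, ?_⟩
  · rw [d_add, d_smul, d_one, smul_zero, add_zero]; exact h1
  · have := h3.add (EqOn.refl (A := A ∩ B) (c • one))
    rwa [add_right_comm] at this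

theorem DD.re {A B : Set X} (hA : IsOpen A) (hB : IsOpen B) {z w : Cochain X} (h : DD A B z w)
    (hw : Closed (A ∪ B) w) (hz : RE (A ∩ B) z) : Ex (A ∪ B) w := by
  obtain ⟨c, hc⟩ := hz
  exact (h.add_one c).ex hA hB hw hc

theorem mv_re {A B : Set X} (hA : IsOpen A) (hB : IsOpen B) {j : ℕ} {f : Cochain X} (hj : Hom j f)
    (hf : Closed (A ∪ B) f) (fA : RE A f) (fB : RE B f) (hne : (A ∩ B).Nonempty)
    (hz : ∀ j', j' + 1 = j → ∀ z, Hom j' z → Closed (A ∩ B) z → RE (A ∩ B) z) : RE (A ∪ B) f := by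
  cases j with
  | zero =>
    obtain ⟨a, ha⟩ := fA.zero hj
    obtain ⟨b, hb⟩ := fB.zero hj
    obtain ⟨p, pA, pB⟩ := hne
    have h1 := ha 0 (ContinuousMap.const _ p) (fun _ => pA)
    have h2 := hb 0 (ContinuousMap.const _ p) (fun _ => pB)
    have : a = b := by
      rw [h1] at h2
      simpa [one] using h2
    subst this
    exact re_of_eq (eqOn_union0 hj (hom_smul a hom_one) ha hb)
  | succ j =>
    obtain ⟨z, z1, z2, z3⟩ := DD.of_ex hj (fA.pos hj) (fB.pos hj)
    exact (z3.re hA hB hf (hz j rfl z z1 z2)).re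

variable (U : Finset (Set X))

structure GC : Prop where
  op : ∀ s ∈ U, IsOpen s
  con : ∀ T ⊆ U, T.Nonempty → (⋂₀ (T : Set (Set X))).Nonempty →
      ContractibleSpace ↥(⋂₀ (T : Set (Set X)))

def WW (T T0 : Finset (Set X)) : Set X := ⋃₀ (T : Set (Set X)) ∩ ⋂₀ (T0 : Set (Set X))

variable {U}

theorem WW_open (hU : GC U) {T T0 : Finset (Set X)} (hT : T ⊆ U) (hT0 : T0 ⊆ U) : IsOpen (WW T T0) := by
  apply IsOpen.inter
  · exact isOpen_sUnion (fun s hs => hU.op s (hT hs))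
  · exact T0.finite_toSet.isOpen_sInter (fun s hs => hU.op s (hT0 hs))

theorem II_open (hU : GC U) {T0 : Finset (Set X)} (hT0 : T0 ⊆ U) : IsOpen (⋂₀ (T0 : Set (Set X))) :=
  T0.finite_toSet.isOpen_sInter (fun s hs => hU.op s (hT0 hs))

variable [DecidableEq (Set X)]

theorem WW_insert (a : Set X) (T T0 : Finset (Set X)) :
    WW (insert a T) T0 = ⋂₀ ((insert a T0 : Finset (Set X)) : Set (Set X)) ∪ WW T T0 := by
  simp only [WW, Finset.coe_insert, Set.sUnion_insert, Set.sInter_insert, Set.union_inter_distrib_right]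

theorem WW_inter (a : Set X) (T T0 : Finset (Set X)) :
    ⋂₀ ((insert a T0 : Finset (Set X)) : Set (Set X)) ∩ WW T T0 = WW T (insert a T0) := by
  simp only [WW, Finset.coe_insert, Set.sInter_insert]
  ext x; simp only [Set.mem_inter_iff]; tauto

theorem WW_empty (T0 : Finset (Set X)) : WW ∅ T0 = ∅ := by simp [WW]

theorem con_re (hU : GC U) {T0 : Finset (Set X)} (hT0 : T0 ⊆ U) (hne : T0.Nonempty)
    {j : ℕ} {f : Cochain X} (hj : Hom j f) (hf : Closed (⋂₀ (T0 : Set (Set X))) f) :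
    RE (⋂₀ (T0 : Set (Set X))) f := by
  by_cases h : (⋂₀ (T0 : Set (Set X))).Nonempty
  · have := hU.con T0 hT0 hne h
    exact contr_re hj hf
  · rw [Set.not_nonempty_iff_eq_empty] at h
    rw [h]
    exact (ex_of_eq0 one_empty).re

theorem nerve_NL (hU : GC U) (T : Finset (Set X)) : T ⊆ U → ∀ T0 ⊆ U, ∀ (j : ℕ) (f : Cochain X), Hom j f →
    Closed (WW T T0) f → ¬ Ex (WW T T0) f →
    ∃ S ⊆ T, S.card = j + 1 ∧ (⋂₀ (S : Set (Set X)) ∩ ⋂₀ (T0 : Set (Set X))).Nonempty := by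
  induction T using Finset.induction_on with
  | empty =>
    intro _ T0 _ j f _ _ h
    rw [WW_empty] at h
    exact (h (ex_of_eq0 one_empty)).elim
  | insert a T ha ih =>
    intro hT T0 hT0 j f hj hf hne
    have haU : a ∈ U := hT (Finset.mem_insert_self a T)
    have hTU : T ⊆ U := (Finset.subset_insert a T).trans hT
    have ha0 : insert a T0 ⊆ U := Finset.insert_subset haU hT0
    cases j with
    | zero =>
      have : (WW (insert a T) T0).Nonempty := by
        by_contra h
        rw [Set.not_nonempty_iff_eq_empty] at h
        rw [h] at hne
        exact hne (ex_of_eq0 one_empty)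
      obtain ⟨p, ⟨s, hs, hp⟩, hp0⟩ := this
      exact ⟨{s}, by simpa using hs, by simp, p, by simpa using hp, hp0⟩
    | succ j =>
      rw [WW_insert] at hf hne
      by_cases hB : Ex (WW T T0) f
      · have hA := (con_re hU ha0 (Finset.insert_nonempty a T0) hj (hf.mono Set.subset_union_left)).pos hj
        obtain ⟨z, z1, z2, z3⟩ := DD.of_ex hj hA hB
        have : ¬ Ex (WW T (insert a T0)) z := fun h => hne
          (z3.ex (II_open hU ha0) (WW_open hU hTU hT0) hf (by rw [WW_inter]; exact h))
        rw [WW_inter] at z2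
        obtain ⟨S, hS, hc, p, hp, hp0⟩ := ih hTU _ ha0 j z z1 z2 this
        refine ⟨insert a S, Finset.insert_subset_insert a hS, ?_, p, ?_, ?_⟩
        · rw [Finset.card_insert_of_notMem (fun h => ha (hS h)), hc]
        · rw [Finset.coe_insert, Set.sInter_insert] at *
          exact ⟨hp0.1, hp⟩
        · rw [Finset.coe_insert, Set.sInter_insert] at *
          exact hp0.2
      · obtain ⟨S, hS, h⟩ := ih hTU T0 hT0 (j + 1) f hj (hf.mono Set.subset_union_right) hB
        exact ⟨S, hS.trans (Finset.subset_insert a T), h⟩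

theorem nerve_FS (hU : GC U) (T : Finset (Set X)) : T ⊆ U → T.Nonempty → ∀ T0 ⊆ U,
    (⋂₀ (T : Set (Set X)) ∩ ⋂₀ (T0 : Set (Set X))).Nonempty → ∀ (j : ℕ) (f : Cochain X), Hom j f →
    Closed (WW T T0) f → RE (WW T T0) f := by
  induction T using Finset.induction_on with
  | empty => intro _ h; simp at h
  | insert a T ha ih =>
    intro hT _ T0 hT0 hne j f hj hf
    have haU : a ∈ U := hT (Finset.mem_insert_self a T)
    have hTU : T ⊆ U := (Finset.subset_insert a T).trans hT
    have ha0 : insert a T0 ⊆ U := Finset.insert_subset haU hT0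
    rw [WW_insert] at hf ⊢
    have hA := con_re hU ha0 (Finset.insert_nonempty a T0) hj (hf.mono Set.subset_union_left)
    rcases T.eq_empty_or_nonempty with rfl | hTn
    · rw [WW_empty, Set.union_empty]; exact hA
    · obtain ⟨p, hp, hp0⟩ := hne
      rw [Finset.coe_insert, Set.sInter_insert] at hp
      have hpa : p ∈ ⋂₀ ((insert a T0 : Finset (Set X)) : Set (Set X)) := by
        rw [Finset.coe_insert, Set.sInter_insert]; exact ⟨hp.1, hp0⟩
      obtain ⟨s, hs⟩ := hTn
      refine mv_re (II_open hU ha0) (WW_open hU hTU hT0) hj hf hA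
        (ih hTU ⟨s, hs⟩ T0 hT0 ⟨p, hp.2, hp0⟩ j f hj (hf.mono Set.subset_union_right)) ?_ ?_
      · rw [WW_inter]
        exact ⟨p, ⟨s, hs, hp.2 s hs⟩, hpa⟩
      · intro j' _ z hz hzc
        rw [WW_inter] at *
        exact ih hTU ⟨s, hs⟩ _ ha0 ⟨p, hp.2, hpa⟩ j' z hz hzc

theorem nerve_S (hU : GC U) (m : ℕ) : ∀ (T : Finset (Set X)), T ⊆ U → T.card = m + 2 → ∀ T0 ⊆ U,
    ∀ f : Cochain X, Hom m f → Closed (WW T T0) f → ¬ RE (WW T T0) f → ∀ q < m, ∀ g : Cochain X, Hom q g →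
    Closed (WW T T0) g → RE (WW T T0) g := by
  induction m with
  | zero => intro T _ _ T0 _ f _ _ _ q hq; omega
  | succ m ih =>
    intro T hT hcard T0 hT0 f hj hf hne q hq g hg hgc
    obtain ⟨S, hS, hSc, hSn⟩ := nerve_NL hU T hT T0 hT0 (m + 1) f hj hf (fun h => hne h.re)
    obtain ⟨a, haS, rfl⟩ : ∃ a ∉ S, insert a S = T := by
      have h1 : (T \ S).card = 1 := by
        rw [Finset.card_sdiff_of_subset hS]; omega
      obtain ⟨a, ha⟩ := Finset.card_eq_one.mp h1
      have ha' : a ∈ T \ S := by rw [ha]; simp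
      refine ⟨a, (Finset.mem_sdiff.mp ha').2, ?_⟩
      rw [← Finset.sdiff_union_of_subset hS, ha]; rfl
    have haU : a ∈ U := hT (Finset.mem_insert_self a S)
    have hTU : S ⊆ U := (Finset.subset_insert a S).trans hT
    have ha0 : insert a T0 ⊆ U := Finset.insert_subset haU hT0
    have hSne : S.Nonempty := by rw [← Finset.card_pos]; omega
    have oA := II_open hU ha0
    have oB := WW_open hU hTU hT0
    rw [WW_insert] at *
    have fA : ∀ (j : ℕ) (h : Cochain X), Hom j h →
      Closed (⋂₀ ((insert a T0 : Finset (Set X)) : Set (Set X)) ∪ WW S T0) h → RE _ h := fun j h hj hc =>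
      con_re hU ha0 (Finset.insert_nonempty a T0) (j := j) (f := h) hj (hc.mono Set.subset_union_left)
    have fB : ∀ (j : ℕ) (h : Cochain X), Hom j h →
      Closed (⋂₀ ((insert a T0 : Finset (Set X)) : Set (Set X)) ∪ WW S T0) h → RE _ h := fun j h hj hc =>
      nerve_FS hU S hTU hSne T0 hT0 hSn j h hj (hc.mono Set.subset_union_right)
    obtain ⟨z, z1, z2, z3⟩ := DD.of_ex hj ((fA _ f hj hf).pos hj) ((fB _ f hj hf).pos hj)
    have hz : ¬ RE (WW S (insert a T0)) z := by
      intro h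
      rw [← WW_inter] at h
      exact hne (z3.re oA oB hf h).re
    rw [WW_inter] at z2
    have key := ih S hTU hSc (insert a T0) ha0 z z1 z2 hz
    refine mv_re oA oB hg hgc (fA q g hg hgc) (fB q g hg hgc) ?_ ?_
    · rw [WW_inter]
      by_contra h
      rw [Set.not_nonempty_iff_eq_empty] at h
      rw [h] at hz
      exact hz (ex_of_eq0 one_empty).re
    · intro j' hj' z' hz' hzc'
      rw [WW_inter] at *
      exact key j' (by omega) z' hz' hzc'

theorem WW0 (T : Finset (Set X)) : WW T ∅ = ⋃₀ (T : Set (Set X)) := by simp [WW]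

theorem NL0 (hU : GC U) (T : Finset (Set X)) (hT : T ⊆ U) (j : ℕ) (f : Cochain X) (hj : Hom j f)
    (hf : Closed Set.univ f) (h : ¬ Ex (⋃₀ (T : Set (Set X))) f) :
    ∃ S ⊆ T, S.card = j + 1 ∧ ∀ (i : ℕ) (g : Cochain X), Hom (i + 1) g → Closed Set.univ g →
      Ex (⋃₀ (S : Set (Set X))) g := by
  obtain ⟨S, h1, h2, h3⟩ := nerve_NL hU T hT ∅ (by simp) j f hj (hf.mono (Set.subset_univ _))
    (by rw [WW0]; exact h)
  refine ⟨S, h1, h2, fun i g hg hc => ?_⟩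
  have := nerve_FS hU S (h1.trans hT) (by rw [← Finset.card_pos]; omega) ∅ (by simp) h3 (i + 1) g hg
    (hc.mono (Set.subset_univ _))
  rw [WW0] at this
  exact this.pos hg

theorem sU_split {S T : Finset (Set X)} (h : S ⊆ T) :
    ⋃₀ (T : Set (Set X)) = ⋃₀ ((T \ S : Finset (Set X)) : Set (Set X)) ∪ ⋃₀ (S : Set (Set X)) := by
  rw [← Set.sUnion_union, ← Finset.coe_union, Finset.sdiff_union_of_subset h]

theorem sU_open (hU : GC U) {T : Finset (Set X)} (hT : T ⊆ U) : IsOpen (⋃₀ (T : Set (Set X))) :=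
  isOpen_sUnion (fun s hs => hU.op s (hT hs))

theorem bound_step (hU : GC U) (T : Finset (Set X)) (hT : T ⊆ U) (p q : ℕ) (f g : Cochain X)
    (hf : Hom p f) (hg : Hom (q + 1) g) (cf : Closed Set.univ f) (cg : Closed Set.univ g)
    (h : ¬ Ex (⋃₀ (T : Set (Set X))) (cup f g)) :
    ∃ S ⊆ T, S.card + (p + q + 2) = T.card ∧ ¬ Ex (⋃₀ (S : Set (Set X))) f ∧
      (p ≠ 0 → ¬ Ex (⋃₀ (S : Set (Set X))) g) := by
  obtain ⟨S, hS, hc, hx⟩ := NL0 hU T hT (p + (q + 1)) (cup f g) (hom_cup hf hg) (cf.cup cg) h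
  have o1 := sU_open hU (Finset.sdiff_subset.trans hT : T \ S ⊆ U)
  have o2 := sU_open hU (hS.trans hT)
  refine ⟨T \ S, Finset.sdiff_subset, ?_, ?_, ?_⟩
  · rw [Finset.card_sdiff_of_subset hS]
    have := Finset.card_le_card hS
    omega
  · intro hf'
    apply h
    rw [sU_split hS]
    exact mv_prod o1 o2 (cf.mono (Set.subset_univ _)) (cg.mono (Set.subset_univ _)) hf' (hx q g hg cg)
  · intro hp hg'
    apply h
    rw [sU_split hS, Set.union_comm]
    obtain ⟨p, rfl⟩ := Nat.exists_eq_succ_of_ne_zero hp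
    exact mv_prod o2 o1 (cf.mono (Set.subset_univ _)) (cg.mono (Set.subset_univ _)) (hx p f hf cf) hg'

theorem bound (hU : GC U) (hcov : ⋃₀ (U : Set (Set X)) = Set.univ) (n : ℕ) (hn : 3 ≤ n) (x P : ℕ → Cochain X)
    (hx : ∀ j, 1 ≤ j → j ≤ n - 1 → Hom (2 * (n - j) + 1) (x j))
    (cx : ∀ j, 1 ≤ j → j ≤ n - 1 → Closed Set.univ (x j))
    (P0 : P 0 = one) (PS : ∀ j, P (j + 1) = cup (P j) (x (j + 1)))
    (hP : ¬ Ex Set.univ (P (n - 1))) : 4 * n ^ 3 + 5 * n + 6 ≤ 6 * U.card + 3 * n ^ 2 := by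
  have hPd : ∀ j, j ≤ n - 1 → Hom (j * (2 * n - j)) (P j) ∧ Closed Set.univ (P j) := by
    intro j
    induction j with
    | zero => intro _; rw [P0]; exact ⟨by simpa using hom_one, closed_one⟩
    | succ j ih =>
      intro hj
      obtain ⟨h1, h2⟩ := ih (by omega)
      rw [PS]
      refine ⟨?_, h2.cup (cx _ (by omega) hj)⟩
      have := hom_cup h1 (hx (j + 1) (by omega) hj)
      convert this using 1
      obtain ⟨k, rfl⟩ : ∃ k, n = j + 2 + k := ⟨n - (j + 2), by omega⟩
      have e1 : 2 * (j + 2 + k) - (j + 1) = j + 3 + 2 * k := by omega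
      have e2 : 2 * (j + 2 + k) - j = j + 4 + 2 * k := by omega
      have e3 : j + 2 + k - (j + 1) = k + 1 := by omega
      rw [e1, e2, e3]; ring
  have step : ∀ j, j + 1 ≤ n - 1 → ∀ T ⊆ U, ¬ Ex (⋃₀ (T : Set (Set X))) (P (j + 1)) →
      ∃ S ⊆ T, S.card + (j * (2 * n - j) + 2 * (n - (j + 1)) + 2) = T.card ∧
        ¬ Ex (⋃₀ (S : Set (Set X))) (P j) ∧ (j * (2 * n - j) ≠ 0 → ¬ Ex (⋃₀ (S : Set (Set X))) (x (j + 1))) := by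
    intro j hj T hT h
    rw [PS] at h
    obtain ⟨h1, h2⟩ := hPd j (by omega)
    exact bound_step hU T hT _ _ _ _ h1 (hx (j + 1) (by omega) hj) h2 (cx (j + 1) (by omega) hj) h
  have b1 : ∀ T ⊆ U, ¬ Ex (⋃₀ (T : Set (Set X))) (P 1) → 2 * n + 1 ≤ T.card := by
    intro T hT h
    obtain ⟨S, hS, hc, h1, -⟩ := step 0 (by omega) T hT h
    have : 0 < S.card := by
      rw [Finset.card_pos]
      by_contra h'
      rw [Finset.not_nonempty_iff_eq_empty] at h'
      subst h'
      apply h1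
      simp only [Finset.coe_empty, Set.sUnion_empty]
      exact ex_of_eq0 one_empty
    omega
  have b2 : ∀ T ⊆ U, ¬ Ex (⋃₀ (T : Set (Set X))) (P 2) → 6 * n - 1 ≤ T.card := by
    intro T hT h
    obtain ⟨S, hS, hc, h1, h2⟩ := step 1 (by omega) T hT h
    have h3 := b1 S (hS.trans hT) h1
    have h2 := h2 (by omega)
    have : S.card ≠ 2 * n + 1 := by
      intro hcard
      have hP1 := hPd 1 (by omega)
      have hx2 := hx 2 (by omega) (by omega)
      have e : 1 * (2 * n - 1) = 2 * n - 1 := by omega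
      rw [e] at hP1
      have := nerve_S hU (2 * n - 1) S (hS.trans hT) (by omega) ∅ (by simp) (P 1) hP1.1
        (hP1.2.mono (Set.subset_univ _)) (by
          rw [WW0]
          intro h
          obtain ⟨k, hk⟩ : ∃ k, 2 * n - 1 = k + 1 := ⟨2 * n - 2, by omega⟩
          rw [hk] at hP1
          exact h1 (h.pos hP1.1)) (2 * (n - 2) + 1) (by omega) (x 2) hx2
        ((cx 2 (by omega) (by omega)).mono (Set.subset_univ _))
      rw [WW0] at this
      exact h2 (this.pos hx2)
    omega
  have b3 : ∀ j, 2 ≤ j → j ≤ n - 1 → ∀ T ⊆ U, ¬ Ex (⋃₀ (T : Set (Set X))) (P j) →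
      (6 * n * (j * (j + 1)) + 6 * j + 12 : ℤ) - j * (j + 1) * (2 * j + 1) ≤ 6 * T.card := by
    intro j hj
    induction j, hj using Nat.le_induction with
    | base =>
      intro _ T hT h
      have := b2 T hT h
      have : (6 * n : ℤ) ≤ T.card + 1 := by omega
      push_cast; linarith
    | succ j hj ih =>
      intro hjn T hT h
      obtain ⟨S, hS, hc, h1, -⟩ := step j hjn T hT h
      have := ih (by omega) S (hS.trans hT) h1
      rw [← hc]
      push_cast [Nat.cast_sub (show j ≤ 2 * n by omega), Nat.cast_sub (show j + 1 ≤ n by omega)]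
      nlinarith
  have := b3 (n - 1) (by omega) le_rfl U subset_rfl (by rw [hcov]; exact hP)
  push_cast [Nat.cast_sub (show 1 ≤ n by omega)] at this
  zify
  nlinarith

end nerve
end CT

namespace CT
open CvxS

section sph
variable {X : Type*} [TopologicalSpace X]

structure Res (A F : Set X) : Prop where
  sub : F ⊆ A
  inj : ∀ (j : ℕ) (f : Cochain X), Hom j f → Closed A f → Ex F f → Ex A f
  surj : ∀ (j : ℕ) (y : Cochain X), Hom j y → Closed F y → ∃ y', Hom j y' ∧ Closed A y' ∧ EqOn F y y'

theorem res_of_def {A F F1 : Set X} (hF : F ⊆ A) (h : C(II × A, X)) (hA : ∀ p, h p ∈ A)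
    (h0 : ∀ a, h (0, a) = a) (h1 : ∀ a, h (1, a) ∈ F1) (ψ : C(F1, X)) (hψ : ∀ g, ψ g ∈ F)
    (e1 : ∀ g (hg : g ∈ F), ψ ⟨h (1, ⟨g, hF hg⟩), h1 _⟩ = g)
    (e2 : ∀ g : F1, h (1, ⟨ψ g, hF (hψ g)⟩) = g) : Res A F := by
  let r : C(A, X) := ⟨fun a => h (1, a), by fun_prop⟩
  let H : (inc A).Homotopy r := ⟨h, fun a => h0 a, fun a => rfl⟩
  let r1 : C(A, F1) := ⟨fun a => ⟨h (1, a), h1 a⟩, by fun_prop⟩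
  let ψA : C(F1, A) := ⟨fun g => ⟨ψ g, hF (hψ g)⟩, by fun_prop⟩
  refine ⟨hF, ?_, ?_⟩
  · intro j f _ hf hex
    have k1 : Ex Set.univ (pb (inc A) f + pb r f) := homotopy_ex H (A := A) (fun p => hA p) hf
    rw [ex_iff_pb]
    apply k1.of_add'
    have k2 : Ex Set.univ (pb ψA (pb (inc A) f) + pb ψA (pb r f)) := k1.pb ψA Set.univ (fun _ _ => trivial)
    have k3 : Ex Set.univ (pb ψA (pb (inc A) f)) := by
      rw [← pb_comp]
      exact hex.pb _ _ (fun g _ => hψ g)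
    have k4 := k2.of_add k3
    rw [← pb_comp] at k4
    have e : r.comp ψA = inc F1 := by
      ext g
      exact e2 g
    rw [e, ← ex_iff_pb] at k4
    exact k4.pb r _ (fun a _ => h1 a)
  · intro j y hj hy
    refine ⟨extn A (pb (ψ.comp r1) y), hom_extn (hom_pb _ hj), closed_extn (hy.pb _ _ (fun a _ => hψ _)), ?_⟩
    intro N σ hσ
    have hh : ∀ x, σ x ∈ A := fun x => hF (hσ x)
    simp only [extn]
    rw [dif_pos hh]
    simp only [pb]
    congr 1
    ext x
    exact (e1 (σ x) (hσ x)).symm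

/-- iterated right multiplication -/
def RR (x : ℕ → Cochain X) : ℕ → Cochain X → Cochain X
  | 0, z => z
  | k + 1, z => RR x k (cup z (x (k + 1)))

def dg : ℕ → ℕ
  | 0 => 0
  | k + 1 => dg k + (2 * (k + 1) + 1)

variable {x y : ℕ → Cochain X} {A B : Set X}

theorem RR_add (K : ℕ) : ∀ z w : Cochain X, RR x K (z + w) = RR x K z + RR x K w := by
  induction K with
  | zero => intro z w; rfl
  | succ K ih => intro z w; simp only [RR]; rw [cup_add_left, ih]

theorem RR_zero (K : ℕ) : RR x K (0 : Cochain X) = 0 := by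
  induction K with
  | zero => rfl
  | succ K ih => simp only [RR]; rw [cup_zero_left, ih]

theorem RR_eqOn (K : ℕ) (h : ∀ i, 1 ≤ i → i ≤ K → EqOn A (x i) (y i)) :
    ∀ z w : Cochain X, EqOn A z w → EqOn A (RR x K z) (RR y K w) := by
  induction K with
  | zero => intro z w h; exact h
  | succ K ih =>
    intro z w hzw
    exact ih (fun i h1 h2 => h i h1 (by omega)) _ _ (hzw.cup (h (K + 1) (by omega) le_rfl))

theorem RR_eqOn' (K : ℕ) {z w : Cochain X} (h : EqOn A z w) : EqOn A (RR x K z) (RR x K w) :=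
  RR_eqOn K (fun _ _ _ => EqOn.refl _) z w h

theorem RR_closed (K : ℕ) (h : ∀ i, 1 ≤ i → i ≤ K → Closed A (x i)) :
    ∀ z : Cochain X, Closed A z → Closed A (RR x K z) := by
  induction K with
  | zero => intro z h; exact h
  | succ K ih =>
    intro z hz
    exact ih (fun i h1 h2 => h i h1 (by omega)) _ (hz.cup (h (K + 1) (by omega) le_rfl))

theorem RR_hom (K : ℕ) (h : ∀ i, 1 ≤ i → i ≤ K → Hom (2 * i + 1) (x i)) :
    ∀ (p : ℕ) (z : Cochain X), Hom p z → Hom (dg K + p) (RR x K z) := by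
  induction K with
  | zero => intro p z h; simpa [dg, RR] using h
  | succ K ih =>
    intro p z hz
    have := ih (fun i h1 h2 => h i h1 (by omega)) _ _ (hom_cup hz (h (K + 1) (by omega) le_rfl))
    simp only [RR, dg]
    convert this using 1
    omega

theorem RR_DD (K : ℕ) (h : ∀ i, 1 ≤ i → i ≤ K → Closed (Set.univ) (x i)) :
    ∀ z w : Cochain X, DD A B z w → DD A B (RR x K z) (RR x K w) := by
  induction K with
  | zero => intro z w h; exact h
  | succ K ih =>
    intro z w hz
    have hc := h (K + 1) (by omega) le_rfl
    exact ih (fun i h1 h2 => h i h1 (by omega)) _ _ (hz.cup (hc.mono (Set.subset_univ _)) (hc.mono (Set.subset_univ _)))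

theorem DD.add_closed {z w z' : Cochain X} (h : DD A B z w) (hz' : Closed A z') : DD A B (z + z') w := by
  obtain ⟨a, b, h1, h2, h3⟩ := h
  refine ⟨a + z', b, ?_, h2, ?_⟩
  · rw [d_add]
    have := h1.add (EqOn.symm hz')
    rwa [add_zero] at this
  · have := h3.add (EqOn.refl (A := A ∩ B) z')
    rwa [add_right_comm] at this

theorem disj_ex (hA : IsOpen A) (hB : IsOpen B) (hAB : A ∩ B = ∅) {j : ℕ} {f : Cochain X} (hj : Hom j f)
    (hf : Closed (A ∪ B) f) (fA : Ex A f) (fB : Ex B f) : Ex (A ∪ B) f := by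
  cases j with
  | zero =>
    exact ex_of_eq0 (eqOn_union0 hj (hom_zero 0) (fA.hom0 hj) (fB.hom0 hj))
  | succ j =>
    obtain ⟨z, z1, z2, z3⟩ := DD.of_ex hj fA fB
    exact z3.ex hA hB hf (by rw [hAB]; exact ex_of_eq0 one_empty)

structure TopC (A : Set X) (K : ℕ) (x : ℕ → Cochain X) : Prop where
  hom : ∀ i, 1 ≤ i → i ≤ K → Hom (2 * i + 1) (x i)
  closed : ∀ i, 1 ≤ i → i ≤ K → Closed A (x i)
  van : ∀ i, dg K < i → ∀ f : Cochain X, Hom i f → Closed A f → Ex A f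
  nex : ¬ Ex A (RR x K one)
  top : ∀ f : Cochain X, Hom (dg K) f → Closed A f → Ex A f ∨ Ex A (f + RR x K one)

structure Sph (M : ℕ) (Z Ap Am : ℕ → Set X) (F F' : Set X) : Prop where
  oP : ∀ m, IsOpen (Ap m)
  oM : ∀ m, IsOpen (Am m)
  un : ∀ m, Ap m ∪ Am m = Z m
  int : ∀ m, Ap (m + 1) ∩ Am (m + 1) = Z m
  int0 : Ap 0 ∩ Am 0 = ∅
  rP : ∀ m, m ≤ M → Res (Ap m) F
  rM : ∀ m, m + 1 ≤ M → Res (Am (m + 1)) F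
  r0 : Res (Am 0) F'
  r1 : Res (Ap 1) F'
  all : Z M = Set.univ

variable {M : ℕ} {Z Ap Am : ℕ → Set X} {F F' : Set X}

theorem Sph.subP (S : Sph M Z Ap Am F F') (m : ℕ) : Ap m ⊆ Z m := by
  rw [← S.un]; exact Set.subset_union_left
theorem Sph.subM (S : Sph M Z Ap Am F F') (m : ℕ) : Am m ⊆ Z m := by
  rw [← S.un]; exact Set.subset_union_right
theorem Sph.ZP (S : Sph M Z Ap Am F F') (m : ℕ) : Z m ⊆ Ap (m + 1) := by
  rw [← S.int]; exact Set.inter_subset_left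
theorem Sph.ZM (S : Sph M Z Ap Am F F') (m : ℕ) : Z m ⊆ Am (m + 1) := by
  rw [← S.int]; exact Set.inter_subset_right

theorem Sph.ddex (S : Sph M Z Ap Am F F') {m : ℕ} {z w : Cochain X} (h : DD (Ap (m + 1)) (Am (m + 1)) z w)
    (hw : Closed (Z (m + 1)) w) (hz : Ex (Z m) z) : Ex (Z (m + 1)) w := by
  rw [← S.un] at hw ⊢
  rw [← S.int] at hz
  exact h.ex (S.oP _) (S.oM _) hw hz

theorem Sph.ddof (S : Sph M Z Ap Am F F') {m : ℕ} (hm : m + 1 ≤ M) {j : ℕ} {f : Cochain X} (hj : Hom (j + 1) f)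
    (hf : Closed (Z (m + 1)) f) (fF : Ex F f) :
    ∃ z, Hom j z ∧ Closed (Z m) z ∧ DD (Ap (m + 1)) (Am (m + 1)) z f := by
  have h := DD.of_ex hj ((S.rP _ hm).inj _ f hj (hf.mono (S.subP _)) fF)
    ((S.rM _ hm).inj _ f hj (hf.mono (S.subM _)) fF)
  rwa [S.int] at h

theorem Sph.lemI (S : Sph M Z Ap Am F F') (j : ℕ) : ∀ (m : ℕ), m + 1 ≤ M → j ≤ m → ∀ f : Cochain X, Hom j f →
    Closed (Z (m + 1)) f → Ex F f → Ex (Z (m + 1)) f := by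
  induction j with
  | zero =>
    intro m hm _ f hj hf fF
    have h1 := (S.rP _ hm).inj _ f hj (hf.mono (S.subP _)) fF
    have h2 := (S.rM _ hm).inj _ f hj (hf.mono (S.subM _)) fF
    rw [← S.un]
    exact ex_of_eq0 (eqOn_union0 hj (hom_zero 0) (h1.hom0 hj) (h2.hom0 hj))
  | succ j ih =>
    intro m hm hjm f hj hf fF
    obtain ⟨z, z1, z2, z3⟩ := S.ddof hm hj hf fF
    obtain ⟨m, rfl⟩ : ∃ m', m = m' + 1 := ⟨m - 1, by omega⟩
    have FZ : F ⊆ Z (m + 1) := (S.rP (m + 1) (by omega)).sub.trans (S.subP _)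
    obtain ⟨z', w1, w2, w3⟩ := (S.rP _ hm).surj j z z1 (z2.mono FZ)
    refine S.ddex (z3.add_closed w2) hf (ih m (by omega) (by omega) _ (hom_add z1 w1)
      (z2.add (w2.mono (S.ZP _))) (ex_of_eq0 ?_))
    have := w3.add (EqOn.refl (A := F) z')
    rwa [coc_add_self] at this

theorem Sph.extend (S : Sph M Z Ap Am F F') (j : ℕ) (m : ℕ) (hm : m + 2 ≤ M) (hj : j ≤ m) (y : Cochain X)
    (hy : Hom j y) (cy : Closed F y) : ∃ y', Hom j y' ∧ Closed (Z (m + 2)) y' ∧ EqOn F y y' := by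
  obtain ⟨a, a1, a2, a3⟩ := (S.rP _ hm).surj j y hy cy
  obtain ⟨b, b1, b2, b3⟩ := (S.rM _ hm).surj j y hy cy
  have h : Ex (Z (m + 1)) (a + b) := by
    apply S.lemI j m (by omega) hj _ (hom_add a1 b1) ((a2.mono (S.ZP _)).add (b2.mono (S.ZM _)))
    apply ex_of_eq0
    have := a3.symm.add b3.symm
    rwa [coc_add_self] at this
  rw [← S.int] at h
  obtain ⟨y', y1, y2, y3, -⟩ := mv_glue_ex (S.oP _) (S.oM _) a1 b1 a2 b2 h
  rw [S.un] at y2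
  exact ⟨y', y1, y2, a3.trans ((y3.mono (S.rP _ hm).sub).symm)⟩

theorem eqcancel {f g : Cochain X} {a : Cochain X} (h : Ex A (f + a)) (h' : EqOn A f g) : Ex A (g + a) :=
  h.congr (h'.add (EqOn.refl _))

/-- the main inductive step, with globally closed classes -/
theorem Sph.step (S : Sph M Z Ap Am F F') (K : ℕ) (hM : M = 2 * (K + 1) + 1) (x : ℕ → Cochain X)
    (hx : TopC F K x) (cx : ∀ i, 1 ≤ i → i ≤ K → Closed Set.univ (x i)) :
    ∃ s, TopC Set.univ (K + 1) (Function.update x (K + 1) s) := by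
  have cR : ∀ (A : Set X) (z : Cochain X), Closed A z → Closed A (RR x K z) := fun A z hz =>
    RR_closed K (fun i h1 h2 => (cx i h1 h2).mono (Set.subset_univ _)) z hz
  have hR : ∀ (p : ℕ) (z : Cochain X), Hom p z → Hom (dg K + p) (RR x K z) := RR_hom K hx.hom
  have cR1 : ∀ A : Set X, Closed A (RR x K one) := fun A => cR A _ closed_one
  have hR1 : Hom (dg K) (RR x K one : Cochain X) := hR 0 one hom_one
  -- the initial class
  obtain ⟨s0, s01, s02, s03, s04⟩ := mv_glue_hom (S.oP 0) (S.oM 0) hom_one (hom_zero 0) closed_one closed_zero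
    (by rw [S.int0]; exact one_empty)
  rw [S.un] at s02
  -- the sequence of classes
  have hs : ∀ m, ∃ s : ℕ → Cochain X, s 0 = s0 ∧ (∀ i ≤ m, Hom i (s i) ∧ Closed (Z i) (s i)) ∧
      ∀ i < m, DD (Ap (i + 1)) (Am (i + 1)) (s i) (s (i + 1)) := by
    intro m
    induction m with
    | zero =>
      refine ⟨fun _ => s0, rfl, ?_, fun i hi => by omega⟩
      intro i hi
      obtain rfl : i = 0 := by omega
      exact ⟨s01, s02⟩
    | succ m ih =>
      obtain ⟨s, h0, h1, h2⟩ := ih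
      obtain ⟨w, w1, w2, w3⟩ := DD.exists (S.oP (m + 1)) (S.oM (m + 1)) (h1 m le_rfl).1
        (by rw [S.int]; exact (h1 m le_rfl).2)
      rw [S.un] at w2
      refine ⟨Function.update s (m + 1) w, by simp [h0], ?_, ?_⟩
      · intro i hi
        by_cases h : i = m + 1
        · subst h; simp [w1, w2]
        · rw [Function.update_of_ne h]; exact h1 i (by omega)
      · intro i hi
        rw [Function.update_of_ne (by omega : i ≠ m + 1)]
        by_cases h : i = m
        · subst h; simpa using w3
        · rw [Function.update_of_ne (by omega)]; exact h2 i (by omega)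
  obtain ⟨s, hs0, hs1, hs2⟩ := hs M
  have dR : ∀ i < M, DD (Ap (i + 1)) (Am (i + 1)) (RR x K (s i)) (RR x K (s (i + 1))) := fun i hi =>
    RR_DD K cx _ _ (hs2 i hi)
  -- properties of the negative half
  have topM0 : ∀ f : Cochain X, Hom (dg K) f → Closed (Am 0) f → Ex (Am 0) f ∨ Ex (Am 0) (f + RR x K one) := by
    intro f hj hf
    obtain ⟨f', f1, f2, f3⟩ := S.r1.surj _ f hj (hf.mono S.r0.sub)
    rcases hx.top f' f1 (f2.mono (S.rP 1 (by omega)).sub) with h | h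
    · left
      exact S.r0.inj _ f hj hf ((((S.rP 1 (by omega)).inj _ _ f1 f2 h).mono S.r1.sub).congr f3.symm)
    · right
      refine S.r0.inj _ _ (hom_add hj hR1) (hf.add (cR1 _)) ?_
      exact eqcancel (((S.rP 1 (by omega)).inj _ _ (hom_add f1 hR1) (f2.add (cR1 _)) h).mono S.r1.sub) f3.symm
  have vanM0 : ∀ i, dg K < i → ∀ f : Cochain X, Hom i f → Closed (Am 0) f → Ex (Am 0) f := by
    intro i hi f hj hf
    obtain ⟨f', f1, f2, f3⟩ := S.r1.surj _ f hj (hf.mono S.r0.sub)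
    have h := hx.van i hi f' f1 (f2.mono (S.rP 1 (by omega)).sub)
    exact S.r0.inj _ f hj hf ((((S.rP 1 (by omega)).inj _ _ f1 f2 h).mono S.r1.sub).congr f3.symm)
  have FP : ∀ m, m ≤ M → F ⊆ Ap m := fun m hm => (S.rP m hm).sub
  have FZ : ∀ m, m ≤ M → F ⊆ Z m := fun m hm => (FP m hm).trans (S.subP m)
  -- vanishing
  have V : ∀ m, m ≤ M → ∀ i, dg K + m < i → ∀ f : Cochain X, Hom i f → Closed (Z m) f → Ex (Z m) f := by
    intro m
    induction m with
    | zero =>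
      intro _ i hi f hj hf
      have h1 := (S.rP 0 (by omega)).inj _ f hj (hf.mono (S.subP _)) (hx.van i hi f hj (hf.mono (FZ _ (by omega))))
      have h2 := vanM0 i hi f hj (hf.mono (S.subM _))
      rw [← S.un] at *
      exact disj_ex (S.oP _) (S.oM _) S.int0 hj hf h1 h2
    | succ m ih =>
      intro hm i hi f hj hf
      obtain ⟨i, rfl⟩ : ∃ i', i = i' + 1 := ⟨i - 1, by omega⟩
      obtain ⟨z, z1, z2, z3⟩ := S.ddof hm hj hf (hx.van _ (by omega) f hj (hf.mono (FZ _ (by omega))))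
      exact S.ddex z3 hf (ih (by omega) i (by omega) z z1 z2)
  -- nonexactness on the negative half
  have nexM : ¬ Ex (Am 0) (RR x K one) := by
    intro h
    apply hx.nex
    exact (S.r1.inj _ _ hR1 (cR1 _) (h.mono S.r0.sub)).mono (FP 1 (by omega))
  have Rs0P : EqOn (Ap 0) (RR x K (s 0)) (RR x K one) := by rw [hs0]; exact RR_eqOn' K s03
  have Rs0M : EqOn (Am 0) (RR x K (s 0)) 0 := by
    rw [hs0]; have := RR_eqOn' (x := x) K s04; rwa [RR_zero] at this
  -- nonvanishing
  have N : ∀ m, m + 1 ≤ M → ¬ Ex (Z (m + 1)) (RR x K (s (m + 1))) := by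
    intro m
    induction m with
    | zero =>
      intro _ hex
      rw [← S.un] at hex
      obtain ⟨a, b, a1, b1, a2, b2, hab⟩ := (dR 0 (by omega)).split (hR 0 (s 0) (hs1 0 (by omega)).1) hex
      rw [S.int, add_zero] at *
      have eF : EqOn F (a + b) (RR x K one) :=
        (hab.mono (FZ _ (by omega))).trans (Rs0P.mono (FP _ (by omega)))
      have eM : EqOn (Am 0) (a + b) 0 := (hab.mono (S.subM _)).trans Rs0M
      have ra := S.rP 1 (by omega)
      have rb := S.rM 0 (by omega)
      rcases hx.top a a1 (a2.mono ra.sub) with ha | ha <;> rcases hx.top b b1 (b2.mono rb.sub) with hb | hb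
      · exact hx.nex ((ha.add hb).congr eF)
      · have h1 := ra.inj _ _ a1 a2 ha
        have h2 := rb.inj _ _ (hom_add b1 hR1) (b2.add (cR1 _)) hb
        have h3 := (h1.mono ((S.subM 0).trans (S.ZP 0))).add (h2.mono ((S.subM 0).trans (S.ZM 0)))
        rw [← add_assoc] at h3
        have h4 := h3.congr (eM.add (EqOn.refl _))
        rw [zero_add] at h4
        exact nexM h4
      · have h1 := ra.inj _ _ (hom_add a1 hR1) (a2.add (cR1 _)) ha
        have h2 := rb.inj _ _ b1 b2 hb
        have h3 := (h1.mono ((S.subM 0).trans (S.ZP 0))).add (h2.mono ((S.subM 0).trans (S.ZM 0)))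
        rw [add_right_comm] at h3
        have h4 := h3.congr (eM.add (EqOn.refl _))
        rw [zero_add] at h4
        exact nexM h4
      · have h3 := ha.add hb
        rw [add_add_add_comm, coc_add_self, add_zero] at h3
        exact hx.nex (h3.congr eF)
    | succ m ih =>
      intro hm hex
      rw [← S.un] at hex
      obtain ⟨a, b, a1, b1, a2, b2, hab⟩ := (dR (m + 1) (by omega)).split (hR _ _ (hs1 (m + 1) (by omega)).1) hex
      rw [S.int] at *
      apply ih (by omega)
      have ra := S.rP (m + 1 + 1) (by omega)
      have rb := S.rM (m + 1) (by omega)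
      have h1 := ra.inj _ _ a1 a2 (hx.van _ (by omega) a a1 (a2.mono ra.sub))
      have h2 := rb.inj _ _ b1 b2 (hx.van _ (by omega) b b1 (b2.mono rb.sub))
      exact ((h1.mono (S.ZP _)).add (h2.mono (S.ZM _))).congr hab
  -- top class
  have O : ∀ m, m + 1 ≤ M → ∀ f : Cochain X, Hom (dg K + (m + 1)) f → Closed (Z (m + 1)) f →
      Ex (Z (m + 1)) f ∨ Ex (Z (m + 1)) (f + RR x K (s (m + 1))) := by
    intro m
    induction m with
    | zero =>
      intro hm f hj hf
      obtain ⟨z, z1, z2, z3⟩ := S.ddof hm hj hf (hx.van _ (by omega) f hj (hf.mono (FZ _ (by omega))))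
      have cs : Closed (Z 0) (RR x K (s 0)) := cR _ _ (hs1 0 (by omega)).2
      have hs : Hom (dg K) (RR x K (s 0)) := hR 0 _ (hs1 0 (by omega)).1
      have cs1 : Closed (Z 1) (RR x K (s 1)) := cR _ _ (hs1 1 (by omega)).2
      have fin : ∀ z, Hom (dg K) z → Closed (Z 0) z → DD (Ap 1) (Am 1) z f → Ex (Am 0) z →
          Ex (Z 1) f ∨ Ex (Z 1) (f + RR x K (s 1)) := by
        intro z z1 z2 z3 zM
        have r0 := S.rP 0 (by omega)
        rcases hx.top z z1 (z2.mono (FZ _ (by omega))) with h | h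
        · left
          have hP := r0.inj _ z z1 (z2.mono (S.subP _)) h
          rw [← S.un] at z2
          have := disj_ex (S.oP _) (S.oM _) S.int0 z1 z2 hP zM
          rw [S.un] at this
          exact S.ddex z3 hf this
        · right
          have hP := r0.inj _ _ (hom_add z1 hR1) ((z2.mono (S.subP _)).add (cR1 _)) h
          have hP' : Ex (Ap 0) (z + RR x K (s 0)) := hP.congr ((EqOn.refl _).add Rs0P.symm)
          have hM' : Ex (Am 0) (z + RR x K (s 0)) := zM.add (ex_of_eq0 Rs0M)
          have c := z2.add cs
          rw [← S.un] at c
          have := disj_ex (S.oP _) (S.oM _) S.int0 (hom_add z1 hs) c hP' hM'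
          rw [S.un] at this
          exact S.ddex (z3.add (dR 0 (by omega))) (hf.add cs1) this
      rcases topM0 z z1 (z2.mono (S.subM _)) with h | h
      · exact fin z z1 z2 z3 h
      · exact fin _ (hom_add z1 hR1) (z2.add (cR1 _)) (z3.add_closed (cR1 _)) h
    | succ m ih =>
      intro hm f hj hf
      obtain ⟨z, z1, z2, z3⟩ := S.ddof hm hj hf (hx.van _ (by omega) f hj (hf.mono (FZ _ (by omega))))
      rcases ih (by omega) z z1 z2 with h | h
      · left; exact S.ddex z3 hf h
      · right
        exact S.ddex (z3.add (dR (m + 1) (by omega))) (hf.add (cR _ _ (hs1 _ (by omega)).2)) h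
  -- assemble
  have key : RR (Function.update x (K + 1) (s M)) (K + 1) one = RR x K (s M) := by
    simp only [RR, Function.update_self]
    rw [one_cup, ← eqOn_univ]
    apply RR_eqOn K
    · intro i _ h2
      rw [Function.update_of_ne (by omega)]; exact EqOn.refl _
    · exact EqOn.refl _
  have hd : dg (K + 1) = dg K + M := by simp only [dg]; omega
  have hall := S.all
  refine ⟨s M, ?_, ?_, ?_, ?_, ?_⟩
  · intro i h1 h2
    by_cases h : i = K + 1
    · subst h; rw [Function.update_self, ← hM]; exact (hs1 M le_rfl).1
    · rw [Function.update_of_ne h]; exact hx.hom i h1 (by omega)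
  · intro i h1 h2
    by_cases h : i = K + 1
    · subst h; rw [Function.update_self, ← hall]; exact (hs1 M le_rfl).2
    · rw [Function.update_of_ne h]; exact cx i h1 (by omega)
  · intro i hi f hj hf
    rw [← hall] at hf ⊢
    exact V M le_rfl i (by omega) f hj hf
  · rw [key, ← hall]
    obtain ⟨m, hm⟩ : ∃ m, M = m + 1 := ⟨2 * (K + 1), hM⟩
    rw [hm]; exact N m (by omega)
  · intro f hj hf
    rw [key, ← hall]
    rw [← hall] at hf
    rw [hd] at hj
    obtain ⟨m, hm⟩ : ∃ m, M = m + 1 := ⟨2 * (K + 1), hM⟩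
    have h3 := O m (by omega) f (by rw [← hm]; exact hj) (by rw [← hm]; exact hf)
    rwa [← hm] at h3

theorem Sph.main (S : Sph M Z Ap Am F F') (K : ℕ) (hM : M = 2 * (K + 1) + 1)
    (h : ∃ x : ℕ → Cochain X, TopC F K x) : ∃ x : ℕ → Cochain X, TopC Set.univ (K + 1) x := by
  obtain ⟨x, hx⟩ := h
  have : ∀ i, ∃ y : Cochain X, 1 ≤ i → i ≤ K → Hom (2 * i + 1) y ∧ Closed Set.univ y ∧ EqOn F (x i) y := by
    intro i
    by_cases hi : 1 ≤ i ∧ i ≤ K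
    · obtain ⟨m, hm⟩ : ∃ m, M = m + 2 := ⟨2 * K + 1, by omega⟩
      obtain ⟨y, y1, y2, y3⟩ := S.extend (2 * i + 1) m hm.ge (by omega) (x i) (hx.hom i hi.1 hi.2) (hx.closed i hi.1 hi.2)
      rw [← hm, S.all] at y2
      exact ⟨y, fun _ _ => ⟨y1, y2, y3⟩⟩
    · exact ⟨0, fun h1 h2 => (hi ⟨h1, h2⟩).elim⟩
  choose y hy using this
  have e : EqOn F (RR x K one) (RR y K one) := RR_eqOn K (fun i h1 h2 => (hy i h1 h2).2.2) _ _ (EqOn.refl _)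
  obtain ⟨s, hs⟩ := S.step K hM y ⟨fun i h1 h2 => (hy i h1 h2).1,
    fun i h1 h2 => (hy i h1 h2).2.1.mono (Set.subset_univ _), hx.van, fun h => hx.nex (h.congr e.symm),
    fun f hj hf => (hx.top f hj hf).imp id (fun h => h.congr ((EqOn.refl _).add e))⟩
    (fun i h1 h2 => (hy i h1 h2).2.1)
  exact ⟨_, hs⟩

end sph
end CT

namespace CT
open CvxS

section transfer
variable {X Y : Type*} [TopologicalSpace X] [TopologicalSpace Y]

theorem pb_RR (φ : C(Y, X)) (x : ℕ → Cochain X) (K : ℕ) : ∀ z : Cochain X,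
    pb φ (RR x K z) = RR (fun i => pb φ (x i)) K (pb φ z) := by
  induction K with
  | zero => intro z; rfl
  | succ K ih => intro z; simp only [RR]; rw [ih, pb_cup]

theorem TopC.transfer {A : Set X} (i : C(Y, X)) (hi : ∀ y, i y ∈ A) (j : C(A, Y)) (hij : ∀ a, i (j a) = a)
    (hji : ∀ y, j ⟨i y, hi y⟩ = y) {K : ℕ} {x : ℕ → Cochain Y} (h : TopC Set.univ K x) :
    ∃ y : ℕ → Cochain X, TopC A K y := by
  have e1 : ∀ f : Cochain Y, pb i (extn A (pb j f)) = f := by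
    intro f
    funext N σ
    simp only [pb, extn]
    have hh : ∀ x, (i.comp σ) x ∈ A := fun x => hi _
    rw [dif_pos hh]
    congr 1
    ext x
    exact hji _
  have e2 : i.comp j = inc A := by ext a; exact hij a
  have key : ∀ f : Cochain X, Ex A f ↔ Ex Set.univ (pb i f) := by
    intro f
    constructor
    · intro h; exact h.pb _ _ (fun y _ => hi y)
    · intro h
      have h2 := h.pb j Set.univ (fun _ _ => trivial)
      rw [← pb_comp, e2, ← ex_iff_pb] at h2
      exact h2
  have e3 : pb i (RR (fun i => extn A (pb j (x i))) K one) = RR x K one := by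
    rw [pb_RR]
    simp only [e1]
    rfl
  refine ⟨fun i => extn A (pb j (x i)), ?_, ?_, ?_, ?_, ?_⟩
  · intro i h1 h2; exact hom_extn (hom_pb _ (h.hom i h1 h2))
  · intro i h1 h2; exact closed_extn ((h.closed i h1 h2).pb _ _ (fun _ _ => trivial))
  · intro m hm f hj hf
    rw [key]
    exact h.van m hm _ (hom_pb _ hj) (hf.pb _ _ (fun y _ => hi y))
  · rw [key, e3]; exact h.nex
  · intro f hj hf
    rw [key, key, pb_add, e3]
    exact h.top _ (hom_pb _ hj) (hf.pb _ _ (fun y _ => hi y))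

theorem topC_point (p : X) (hp : ∀ y : X, y = p) : TopC (Set.univ : Set X) 0 (fun _ => 0) := by
  have : Unique (Set.univ : Set X) := ⟨⟨⟨p, trivial⟩⟩, fun a => Subtype.ext (hp _)⟩
  refine ⟨fun i h1 h2 => by omega, fun i h1 h2 => by omega, ?_, ?_, ?_⟩
  · intro i hi f hj hf
    obtain ⟨m, rfl⟩ : ∃ m, i = m + 1 := ⟨i - 1, by simp only [dg] at hi; omega⟩
    exact contr_ex hj hf
  · intro h
    have := h.hom0 hom_one 0 (ContinuousMap.const _ p) (fun _ => trivial)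
    simp [one, RR] at this
  · intro f hj hf
    obtain ⟨c, hc⟩ := contr_re hj hf
    have h01 : ∀ c : R, c = 0 ∨ c = 1 := by decide
    rcases h01 c with rfl | rfl
    · left; simpa using hc
    · right; simpa [RR] using hc

end transfer
end CT

namespace CT
open CvxS Matrix
open scoped ComplexOrder

section geom
variable {n : ℕ}

abbrev Vc (n : ℕ) := Fin n → ℂ
abbrev Mc (n : ℕ) := Matrix (Fin n) (Fin n) ℂ

noncomputable def Wm (e v : Vc n) : Mc n :=
  1 - (1 + star v ⬝ᵥ e)⁻¹ • vecMulVec (v + e) (star (v + e))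

theorem star_dot (v e : Vc n) : star (star v ⬝ᵥ e) = star e ⬝ᵥ v := by
  rw [Matrix.star_dotProduct, star_star]

theorem Wm_ne {e v : Vc n} (hv : star v ⬝ᵥ v = 1) (he : star e ⬝ᵥ e = 1) (hne : v + e ≠ 0) :
    1 + star v ⬝ᵥ e ≠ 0 := by
  intro h
  apply hne
  rw [← dotProduct_star_self_eq_zero]
  have h1 : star v ⬝ᵥ e = -1 := by linear_combination h
  have h2 : star e ⬝ᵥ v = -1 := by rw [← star_dot, h1]; simp
  rw [star_add, add_dotProduct, dotProduct_add, dotProduct_add, hv, he, h1, h2]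
  ring

theorem Wm_uni {e v : Vc n} (hv : star v ⬝ᵥ v = 1) (he : star e ⬝ᵥ e = 1) (hne : v + e ≠ 0) :
    Wm e v * (Wm e v)ᴴ = 1 := by
  have h := Wm_ne hv he hne
  have h' : 1 + star e ⬝ᵥ v ≠ 0 := by
    intro h2; apply h
    have := congrArg star h2
    rw [star_add, star_dot] at this
    simpa using this
  have huu : star (v + e) ⬝ᵥ (v + e) = (1 + star v ⬝ᵥ e) + (1 + star e ⬝ᵥ v) := by
    rw [star_add, add_dotProduct, dotProduct_add, dotProduct_add, hv, he]; ring
  have hc : star ((1 + star v ⬝ᵥ e)⁻¹) = (1 + star e ⬝ᵥ v)⁻¹ := by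
    rw [star_inv₀, star_add, star_dot, star_one]
  unfold Wm
  rw [conjTranspose_sub, conjTranspose_one, conjTranspose_smul, conjTranspose_vecMulVec, star_star, hc]
  set u := v + e
  rw [sub_mul, mul_sub, mul_sub, one_mul, one_mul, mul_one, smul_mul_smul_comm, vecMulVec_mul_vecMulVec, huu]
  ext i j
  simp only [Matrix.sub_apply, Matrix.smul_apply, smul_eq_mul, vecMulVec_apply, Pi.smul_apply]
  field_simp
  ring

theorem Wm_uni' {e v : Vc n} (hv : star v ⬝ᵥ v = 1) (he : star e ⬝ᵥ e = 1) (hne : v + e ≠ 0) :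
    (Wm e v)ᴴ * Wm e v = 1 := mul_eq_one_comm.mp (Wm_uni hv he hne)

theorem Wm_e {e v : Vc n} (hv : star v ⬝ᵥ v = 1) (he : star e ⬝ᵥ e = 1) (hne : v + e ≠ 0) :
    Wm e v *ᵥ e = -v := by
  have h := Wm_ne hv he hne
  unfold Wm
  rw [sub_mulVec, one_mulVec, smul_mulVec, vecMulVec_mulVec, star_add, add_dotProduct, he]
  ext i
  simp
  field_simp
  ring

theorem Wm_v {e v : Vc n} (hv : star v ⬝ᵥ v = 1) (he : star e ⬝ᵥ e = 1) (hne : v + e ≠ 0) :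
    (Wm e v)ᴴ *ᵥ v = -e := by
  have h := congrArg (fun w => (Wm e v)ᴴ *ᵥ w) (Wm_e hv he hne)
  simp only [mulVec_mulVec, Wm_uni' hv he hne, one_mulVec, mulVec_neg] at h
  exact (neg_eq_iff_eq_neg.mpr h).symm

theorem Wm_fix {e v : Vc n} (j : Fin n) (h1 : v j = 0) (h2 : e j = 0) :
    Wm e v *ᵥ Pi.single j 1 = Pi.single j 1 := by
  unfold Wm
  rw [sub_mulVec, one_mulVec, smul_mulVec, vecMulVec_mulVec]
  simp [h1, h2]

theorem fix_conj {T : Mc n} (hT : Tᴴ * T = 1) {v w : Vc n} (h : T *ᵥ v = w) : Tᴴ *ᵥ w = v := by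
  rw [← h, mulVec_mulVec, hT, one_mulVec]

noncomputable def Dg (o : Fin n) (c : ℂ) : Mc n := diagonal (Function.update 1 o c)

theorem Dg_mul (o : Fin n) (a b : ℂ) : Dg o a * Dg o b = Dg o (a * b) := by
  unfold Dg
  rw [diagonal_mul_diagonal]
  congr 1
  ext i
  by_cases h : i = o
  · subst h; simp
  · simp [Function.update_of_ne h]

theorem Dg_one (o : Fin n) : Dg o 1 = 1 := by
  unfold Dg
  rw [← diagonal_one]
  congr 1
  ext i
  by_cases h : i = o
  · subst h; simp
  · simp [Function.update_of_ne h]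

theorem Dg_star (o : Fin n) (a : ℂ) : (Dg o a)ᴴ = Dg o (star a) := by
  unfold Dg
  rw [diagonal_conjTranspose]
  congr 1
  ext i
  by_cases h : i = o
  · subst h; simp
  · simp [Function.update_of_ne h]

theorem Dg_det (o : Fin n) (a : ℂ) : (Dg o a).det = a := by
  unfold Dg
  rw [det_diagonal, Finset.prod_update_of_mem (Finset.mem_univ _)]
  simp

theorem Dg_fix (o j : Fin n) (h : j ≠ o) (a : ℂ) : Dg o a *ᵥ Pi.single j 1 = Pi.single j 1 := by
  unfold Dg
  rw [diagonal_mulVec_single, Function.update_of_ne h]; simp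

theorem Dg_cont (o : Fin n) : Continuous (Dg o) := by
  unfold Dg
  apply Continuous.matrix_diagonal
  exact continuous_const.update o continuous_id

noncomputable def act (o : Fin n) (T g : Mc n) : Mc n := T * g * Dg o (star T.det)

theorem det_uni {T : Mc n} (hT : Tᴴ * T = 1) : star T.det * T.det = 1 := by
  rw [← det_conjTranspose, ← det_mul, hT, det_one]

theorem act_act (o : Fin n) {T : Mc n} (hT : Tᴴ * T = 1) (g : Mc n) : act o Tᴴ (act o T g) = g := by
  unfold act
  rw [det_conjTranspose, star_star]
  calc Tᴴ * (T * g * Dg o (star T.det)) * Dg o T.det = (Tᴴ * T) * g * (Dg o (star T.det) * Dg o T.det) := by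
        simp only [Matrix.mul_assoc]
    _ = g := by rw [hT, Dg_mul, det_uni hT, Dg_one, one_mul, mul_one]

/-- matrices in SU(n) fixing the basis vectors of index at least `k` -/
def Gs (n k : ℕ) : Set (Mc n) :=
  {g | gᴴ * g = 1 ∧ g.det = 1 ∧ ∀ j : Fin n, k ≤ j → g *ᵥ Pi.single j 1 = Pi.single j 1}

theorem act_mem {k : ℕ} (hk : 1 ≤ k) {o : Fin n} (ho : (o : ℕ) = 0) {T g : Mc n} (hT : Tᴴ * T = 1)
    (hf : ∀ j : Fin n, k ≤ j → T *ᵥ Pi.single j 1 = Pi.single j 1) (hg : g ∈ Gs n k) : act o T g ∈ Gs n k := by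
  obtain ⟨h1, h2, h3⟩ := hg
  have hd := det_uni hT
  refine ⟨?_, ?_, ?_⟩
  · unfold act
    rw [conjTranspose_mul, conjTranspose_mul, Dg_star, star_star]
    calc Dg o T.det * (gᴴ * Tᴴ) * (T * g * Dg o (star T.det)) =
          Dg o T.det * (gᴴ * (Tᴴ * T) * g) * Dg o (star T.det) := by simp only [Matrix.mul_assoc]
      _ = 1 := by rw [hT, mul_one, h1, mul_one, Dg_mul, mul_comm, hd, Dg_one]
  · unfold act
    rw [det_mul, det_mul, h2, Dg_det, mul_one, mul_comm, hd]
  · intro j hj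
    unfold act
    rw [← mulVec_mulVec, ← mulVec_mulVec, Dg_fix o j (by intro h; subst h; omega), h3 j hj, hf j hj]

theorem act_col {κ o : Fin n} (ho : κ ≠ o) (T g : Mc n) :
    act o T g *ᵥ Pi.single κ 1 = T *ᵥ (g *ᵥ Pi.single κ 1) := by
  unfold act
  rw [← mulVec_mulVec, ← mulVec_mulVec, Dg_fix o κ ho]

end geom
end CT

namespace CT
open CvxS Matrix
open scoped ComplexOrder

section geom2
variable {n : ℕ}

noncomputable def qq (w : Vc n) : ℝ := (star w ⬝ᵥ w).re

theorem qq_coe (w : Vc n) : star w ⬝ᵥ w = (qq w : ℂ) := by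
  have h : star (star w ⬝ᵥ w) = star w ⬝ᵥ w := star_dot w w
  exact (Complex.conj_eq_iff_re.mp h).symm

theorem qq_pos {w : Vc n} (h : w ≠ 0) : 0 < qq w := by
  have h1 : 0 < star w ⬝ᵥ w := dotProduct_star_self_pos_iff.mpr h
  rw [qq_coe] at h1
  exact_mod_cast h1

noncomputable def nz (w : Vc n) : Vc n := (√(qq w))⁻¹ • w

theorem nz_unit {w : Vc n} (h : w ≠ 0) : star (nz w) ⬝ᵥ nz w = 1 := by
  have h1 := qq_pos h
  unfold nz
  rw [star_smul, smul_dotProduct, dotProduct_smul, qq_coe, smul_smul, star_trivial]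
  rw [Complex.real_smul]
  norm_cast
  rw [← mul_inv, Real.mul_self_sqrt h1.le, inv_mul_cancel₀ h1.ne']

theorem nz_of_unit {w : Vc n} (h : star w ⬝ᵥ w = 1) : nz w = w := by
  have : qq w = 1 := by unfold qq; rw [h]; rfl
  unfold nz
  rw [this]; simp

structure Bok (e : Vc n) (B : Set (Vc n)) : Prop where
  zero : (0 : Vc n) ∉ B
  ne : ∀ v ∈ B, v + e ≠ 0
  cvx : ∀ v ∈ B, ∀ l t : ℝ, 0 < l → 0 ≤ t → t ≤ 1 → l • ((1 - t) • v + t • e) ∈ B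

noncomputable def seg (e : Vc n) (t : ℝ) (v : Vc n) : Vc n := (1 - t) • v + t • e

variable {e e0 : Vc n} {B : Set (Vc n)}

theorem Bok.seg_mem (hB : Bok e B) {v : Vc n} (hv : v ∈ B) {t : ℝ} (h0 : 0 ≤ t) (h1 : t ≤ 1) : seg e t v ∈ B := by
  have := hB.cvx v hv 1 t one_pos h0 h1
  rwa [one_smul] at this

theorem Bok.seg_ne (hB : Bok e B) {v : Vc n} (hv : v ∈ B) {t : ℝ} (h0 : 0 ≤ t) (h1 : t ≤ 1) : seg e t v ≠ 0 :=
  fun h => hB.zero (h ▸ hB.seg_mem hv h0 h1)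

theorem Bok.nz_mem (hB : Bok e B) {v : Vc n} (hv : v ∈ B) {t : ℝ} (h0 : 0 ≤ t) (h1 : t ≤ 1) :
    nz (seg e t v) ∈ B :=
  hB.cvx v hv _ t (by have := qq_pos (hB.seg_ne hv h0 h1); positivity) h0 h1

noncomputable def Tm (e : Vc n) (t : ℝ) (v : Vc n) : Mc n := Wm e (nz (seg e t v)) * (Wm e v)ᴴ

section
variable (he : star e ⬝ᵥ e = 1) (hB : Bok e B) {v : Vc n} (hv : v ∈ B) (hu : star v ⬝ᵥ v = 1)
  {t : ℝ} (h0 : 0 ≤ t) (h1 : t ≤ 1)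
include he hB hv hu h0 h1

theorem Tm_uni : (Tm e t v)ᴴ * Tm e t v = 1 := by
  unfold Tm
  rw [conjTranspose_mul, conjTranspose_conjTranspose]
  have a := Wm_uni' (nz_unit (hB.seg_ne hv h0 h1)) he (hB.ne _ (hB.nz_mem hv h0 h1))
  have b := Wm_uni hu he (hB.ne _ hv)
  rw [Matrix.mul_assoc, ← Matrix.mul_assoc _ _ (Wm e v)ᴴ, a, one_mul, b]

theorem Tm_v : Tm e t v *ᵥ v = nz (seg e t v) := by
  unfold Tm
  rw [← mulVec_mulVec, Wm_v hu he (hB.ne _ hv), mulVec_neg,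
    Wm_e (nz_unit (hB.seg_ne hv h0 h1)) he (hB.ne _ (hB.nz_mem hv h0 h1)), neg_neg]

omit h0 h1 in
theorem Tm_zero : Tm e 0 v = 1 := by
  unfold Tm
  have : seg e 0 v = v := by simp [seg]
  rw [this, nz_of_unit hu, Wm_uni hu he (hB.ne _ hv)]

omit h0 h1 in
theorem Tm_fix (j : Fin n) (hj : v j = 0) (hj' : e j = 0) : Tm e t v *ᵥ Pi.single j 1 = Pi.single j 1 := by
  unfold Tm
  rw [← mulVec_mulVec, fix_conj (Wm_uni' hu he (hB.ne _ hv)) (Wm_fix j hj hj'), Wm_fix j _ hj']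
  simp [nz, seg, hj, hj']
end

/-- the column `κ` -/
noncomputable def pr (κ : Fin n) (g : Gs n (κ + 1)) : Vc n := g.1 *ᵥ Pi.single κ 1

theorem pr_cont (κ : Fin n) : Continuous (pr κ) := by
  unfold pr
  exact continuous_subtype_val.matrix_mulVec continuous_const

theorem dot_uni {g : Mc n} (hg : gᴴ * g = 1) (v w : Vc n) : star (g *ᵥ v) ⬝ᵥ (g *ᵥ w) = star v ⬝ᵥ w := by
  rw [star_mulVec, dotProduct_mulVec, vecMul_vecMul, hg, vecMul_one]

theorem pr_unit (κ : Fin n) (g : Gs n (κ + 1)) : star (pr κ g) ⬝ᵥ pr κ g = 1 := by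
  unfold pr
  rw [dot_uni g.2.1]
  simp

theorem pr_supp (κ : Fin n) (g : Gs n (κ + 1)) (j : Fin n) (hj : κ < j) : pr κ g j = 0 := by
  have h := g.2.2.2 j hj
  have h2 := dot_uni g.2.1 (Pi.single j 1) (Pi.single κ 1)
  rw [h] at h2
  have h3 : star (Pi.single j 1 : Vc n) = Pi.single j 1 := by
    rw [← Pi.single_star]; simp
  rw [h3, single_one_dotProduct, single_one_dotProduct, Pi.single_eq_of_ne hj.ne'] at h2
  exact h2

theorem res_fib {κ o : Fin n} (ho : (o : ℕ) = 0) (hκ : o ≠ κ) (he : star e ⬝ᵥ e = 1)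
    (hs : ∀ j, κ < j → e j = 0) (hB : Bok e B) (he0 : e0 ∈ B) (hu0 : star e0 ⬝ᵥ e0 = 1)
    (hs0 : ∀ j, κ < j → e0 j = 0) :
    Res {g : Gs n (κ + 1) | pr κ g ∈ B} {g : Gs n (κ + 1) | pr κ g = e0} := by
  let A : Set (Gs n (κ + 1)) := {g : Gs n (κ + 1) | pr κ g ∈ B}
  have hmem : ∀ (t : II) (a : A), act o (Tm e t (pr κ a)) a.1.1 ∈ Gs n (κ + 1) := by
    intro t a
    refine act_mem (by omega) ho (Tm_uni he hB a.2 (pr_unit κ _) t.2.1 t.2.2) ?_ a.1.2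
    intro j hj
    exact Tm_fix he hB a.2 (pr_unit κ _) j (pr_supp κ _ j hj) (hs j hj)
  have cseg : Continuous (fun p : II × A => seg e p.1 (pr κ p.2)) := by
    have := pr_cont κ
    unfold seg
    fun_prop
  have cnz : Continuous (fun p : II × A => nz (seg e p.1 (pr κ p.2))) := by
    unfold nz
    have hi : Continuous (fun p : II × A => (√(qq (seg e p.1 (pr κ p.2))))⁻¹) := by
      refine Continuous.inv₀ ?_ ?_
      rotate_left
      · intro p
        have := qq_pos (hB.seg_ne p.2.2 p.1.2.1 p.1.2.2)
        positivity
      unfold qq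
      exact Real.continuous_sqrt.comp (Complex.continuous_re.comp (cseg.star.dotProduct cseg))
    exact hi.smul cseg
  have cW : ∀ f : II × A → Vc n, Continuous f → (∀ p, star (f p) ⬝ᵥ f p = 1) → (∀ p, f p + e ≠ 0) →
      Continuous (fun p => Wm e (f p)) := by
    intro f hf h1 h2
    unfold Wm
    have hi : Continuous (fun p : II × A => (1 + star (f p) ⬝ᵥ e)⁻¹) := by
      refine Continuous.inv₀ (continuous_const.add (hf.star.dotProduct continuous_const)) ?_
      intro p; exact Wm_ne (h1 p) he (h2 p)
    have hm : Continuous (fun p : II × A => vecMulVec (f p + e) (star (f p + e))) :=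
      (hf.add continuous_const).matrix_vecMulVec (hf.add continuous_const).star
    exact continuous_const.sub (hi.smul hm)
  have cpr : Continuous (fun p : II × A => pr κ p.2) := by
    have := pr_cont κ
    fun_prop
  have cT : Continuous (fun p : II × A => Tm e p.1 (pr κ p.2)) := by
    unfold Tm
    refine Continuous.matrix_mul (cW _ cnz ?_ ?_) (cW _ cpr ?_ ?_).matrix_conjTranspose
    · intro p; exact nz_unit (hB.seg_ne p.2.2 p.1.2.1 p.1.2.2)
    · intro p; exact hB.ne _ (hB.nz_mem p.2.2 p.1.2.1 p.1.2.2)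
    · intro p; exact pr_unit κ _
    · intro p; exact hB.ne _ p.2.2
  have cact : ∀ {Y : Type} [TopologicalSpace Y] (f g : Y → Mc n), Continuous f → Continuous g →
      Continuous (fun y => act o (f y) (g y)) := by
    intro Y _ f g hf hg
    unfold act
    exact (hf.matrix_mul hg).matrix_mul ((Dg_cont o).comp (hf.matrix_det.star))
  let h : C(II × A, Gs n (κ + 1)) := ⟨fun p => ⟨act o (Tm e p.1 (pr κ p.2)) p.2.1.1, hmem p.1 p.2⟩,
    Continuous.subtype_mk (cact _ _ cT (by fun_prop)) _⟩
  have hpr : ∀ p : II × A, pr κ (h p) = nz (seg e p.1 (pr κ p.2)) := by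
    intro p
    have := act_col hκ.symm (Tm e p.1 (pr κ p.2)) p.2.1.1
    exact this.trans (Tm_v he hB p.2.2 (pr_unit κ _) p.1.2.1 p.1.2.2)
  have seg1 : ∀ v, nz (seg e 1 v) = e := by
    intro v
    have : seg e 1 v = e := by simp [seg]
    rw [this, nz_of_unit he]
  have tu := Tm_uni he hB he0 hu0 zero_le_one le_rfl
  have tu' : (Tm e 1 e0)ᴴᴴ * (Tm e 1 e0)ᴴ = 1 := by
    rw [conjTranspose_conjTranspose]; exact mul_eq_one_comm.mp tu
  have tv := Tm_v he hB he0 hu0 zero_le_one le_rfl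
  rw [seg1] at tv
  let F1 : Set (Gs n (κ + 1)) := {g | pr κ g = e}
  have mψ : ∀ g : F1, act o (Tm e 1 e0)ᴴ g.1.1 ∈ Gs n (κ + 1) := by
    intro g
    refine act_mem (by omega) ho tu' ?_ g.1.2
    intro j hj
    exact fix_conj tu (Tm_fix he hB he0 hu0 j (hs0 j hj) (hs j hj))
  let ψ : C(F1, Gs n (κ + 1)) := ⟨fun g => ⟨act o (Tm e 1 e0)ᴴ g.1.1, mψ g⟩,
    Continuous.subtype_mk (cact _ _ continuous_const (by fun_prop)) _⟩
  have hψ : ∀ g, pr κ (ψ g) = e0 := by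
    intro g
    have := act_col hκ.symm (Tm e 1 e0)ᴴ g.1.1
    refine this.trans ?_
    have hg : g.1.1 *ᵥ Pi.single κ 1 = e := g.2
    rw [hg]
    exact fix_conj tu tv
  have hF : {g : Gs n (κ + 1) | pr κ g = e0} ⊆ A := by
    intro g hg
    change pr κ g ∈ B
    rw [show pr κ g = e0 from hg]; exact he0
  refine res_of_def (F1 := F1) hF h ?_ ?_ ?_ ψ hψ ?_ ?_
  · intro p
    change pr κ (h p) ∈ B
    rw [hpr]
    exact hB.nz_mem p.2.2 p.1.2.1 p.1.2.2
  · intro a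
    apply Subtype.ext
    change act o (Tm e 0 (pr κ a)) a.1.1 = a.1.1
    rw [Tm_zero he hB a.2 (pr_unit κ _)]
    unfold act
    rw [det_one, star_one, Dg_one, one_mul, mul_one]
  · intro a
    change pr κ (h (1, a)) = e
    rw [hpr]
    exact seg1 _
  · intro g hg
    apply Subtype.ext
    change act o (Tm e 1 e0)ᴴ (act o (Tm e 1 (pr κ g)) g.1) = g.1
    rw [show pr κ g = e0 from hg]
    exact act_act o tu _
  · intro g
    apply Subtype.ext
    change act o (Tm e 1 (pr κ (ψ g))) (act o (Tm e 1 e0)ᴴ g.1.1) = g.1.1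
    rw [hψ]
    have := act_act o tu' g.1.1
    rwa [conjTranspose_conjTranspose] at this

end geom2
end CT

namespace CT
open CvxS Matrix
open scoped ComplexOrder

section geom3
variable {n : ℕ}

def idx (κ : Fin n) (i : ℕ) : Fin n := ⟨κ - i / 2, by omega⟩
noncomputable def cc (κ : Fin n) (i : ℕ) (v : Vc n) : ℝ :=
  if i % 2 = 0 then (v (idx κ i)).re else (v (idx κ i)).im
noncomputable def ep (κ : Fin n) (i : ℕ) : Vc n :=
  Pi.single (idx κ i) (if i % 2 = 0 then 1 else Complex.I)

theorem cc_add (κ : Fin n) (i : ℕ) (v w : Vc n) : cc κ i (v + w) = cc κ i v + cc κ i w := by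
  unfold cc; split_ifs <;> simp
theorem cc_smul (κ : Fin n) (i : ℕ) (a : ℝ) (v : Vc n) : cc κ i (a • v) = a * cc κ i v := by
  unfold cc; split_ifs <;> simp
theorem cc_zero (κ : Fin n) (i : ℕ) : cc κ i 0 = 0 := by
  unfold cc; split_ifs <;> simp

theorem cc_cont (κ : Fin n) (i : ℕ) : Continuous (cc κ i) := by
  unfold cc
  split_ifs
  · exact Complex.continuous_re.comp (continuous_apply _)
  · exact Complex.continuous_im.comp (continuous_apply _)

theorem cc_ep (κ : Fin n) (m : ℕ) : cc κ m (ep κ m) = 1 := by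
  unfold cc ep
  split_ifs <;> simp

theorem cc_ep_lt (κ : Fin n) {i m : ℕ} (h : i < m) (hm : m ≤ 2 * κ + 1) : cc κ i (ep κ m) = 0 := by
  unfold cc ep
  by_cases h2 : idx κ i = idx κ m
  · rw [h2]
    have h3 : (κ : ℕ) - i / 2 = κ - m / 2 := congrArg Fin.val h2
    rw [if_pos (by omega), Pi.single_eq_same, if_neg (by omega)]
    simp
  · simp [Pi.single_eq_of_ne h2]

theorem ep_unit (κ : Fin n) (m : ℕ) : star (ep κ m) ⬝ᵥ ep κ m = 1 := by
  unfold ep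
  rw [← Pi.single_star, single_dotProduct]
  split_ifs <;> simp

theorem ep_supp (κ : Fin n) (m : ℕ) (j : Fin n) (hj : κ < j) : ep κ m j = 0 := by
  unfold ep
  rw [Pi.single_eq_of_ne]
  rintro rfl
  have : (κ : ℕ) < κ - m / 2 := hj
  omega

def Bs (κ : Fin n) (s : ℝ) (m : ℕ) : Set (Vc n) := {v | (∃ i < m, cc κ i v ≠ 0) ∨ 0 < s * cc κ m v}

theorem Bs_ok (κ : Fin n) {s : ℝ} (hs : s * s = 1) {m : ℕ} (hm : m ≤ 2 * κ + 1) : Bok (s • ep κ m) (Bs κ s m) := by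
  refine ⟨?_, ?_, ?_⟩
  · rintro (⟨i, _, h⟩ | h)
    · exact h (cc_zero _ _)
    · rw [cc_zero] at h; simp at h
  · rintro v (⟨i, hi, h⟩ | h) h0
    · have := congrArg (cc κ i) h0
      rw [cc_add, cc_smul, cc_ep_lt κ hi hm, cc_zero, mul_zero, add_zero] at this
      exact h this
    · have := congrArg (cc κ m) h0
      rw [cc_add, cc_smul, cc_ep, cc_zero, mul_one] at this
      have h5 : cc κ m v = -s := by linarith
      rw [h5] at h
      nlinarith
  · intro v hv l t hl h0 h1
    by_cases ht : t = 1
    · subst ht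
      right
      rw [cc_smul, cc_add, cc_smul, cc_smul, cc_smul, cc_ep]
      nlinarith
    · have ht' : 0 < 1 - t := by
        have := lt_of_le_of_ne h1 ht
        linarith
      rcases hv with ⟨i, hi, h⟩ | h
      · left
        refine ⟨i, hi, ?_⟩
        rw [cc_smul, cc_add, cc_smul, cc_smul, cc_smul, cc_ep_lt κ hi hm, mul_zero, mul_zero, add_zero]
        exact mul_ne_zero hl.ne' (mul_ne_zero ht'.ne' h)
      · right
        rw [cc_smul, cc_add, cc_smul, cc_smul, cc_smul, cc_ep]
        have e : s * (l * ((1 - t) * cc κ m v + t * (s * 1))) = l * ((1 - t) * (s * cc κ m v) + t * (s * s)) := by ring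
        rw [e, hs]
        have := mul_pos ht' h
        positivity

theorem Bs_open (κ : Fin n) (s : ℝ) (m : ℕ) : IsOpen (Bs κ s m) := by
  have : Bs κ s m = (⋃ i ∈ Set.Iio m, {v | cc κ i v ≠ 0}) ∪ {v | 0 < s * cc κ m v} := by
    ext v; simp [Bs]
  rw [this]
  apply IsOpen.union
  · exact isOpen_biUnion fun i _ => isOpen_ne_fun (cc_cont κ i) continuous_const
  · exact isOpen_lt continuous_const (continuous_const.mul (cc_cont κ m))

def Zs (κ : Fin n) (m : ℕ) : Set (Vc n) := {v | ∃ i ≤ m, cc κ i v ≠ 0}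

theorem su_unit (κ : Fin n) {s : ℝ} (hs : s * s = 1) (m : ℕ) : star (s • ep κ m) ⬝ᵥ (s • ep κ m) = 1 := by
  rw [star_smul, smul_dotProduct, dotProduct_smul, ep_unit, smul_smul, star_trivial, hs, one_smul]

theorem su_supp (κ : Fin n) (s : ℝ) (m : ℕ) (j : Fin n) (hj : κ < j) : (s • ep κ m) j = 0 := by
  simp [ep_supp κ m j hj]

theorem sph_G {κ o : Fin n} (ho : (o : ℕ) = 0) (hκ : o ≠ κ) :
    Sph (X := Gs n (κ + 1)) (2 * κ + 1) (fun m => {g | pr κ g ∈ Zs κ m}) (fun m => {g | pr κ g ∈ Bs κ 1 m})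
      (fun m => {g | pr κ g ∈ Bs κ (-1) m}) {g | pr κ g = (1 : ℝ) • ep κ 0} {g | pr κ g = (-1 : ℝ) • ep κ 0} := by
  have h1 : (1 : ℝ) * 1 = 1 := by norm_num
  have h2 : (-1 : ℝ) * (-1) = 1 := by norm_num
  have base : ∀ s r : ℝ, s * s = 1 → ∀ m, s • ep κ 0 ∈ Bs κ r (m + 1) := by
    intro s r hs m
    left
    refine ⟨0, by omega, ?_⟩
    rw [cc_smul, cc_ep]
    intro h
    nlinarith
  have base0 : ∀ s : ℝ, s * s = 1 → s • ep κ 0 ∈ Bs κ s 0 := by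
    intro s hs
    right
    rw [cc_smul, cc_ep, mul_one, hs]; exact one_pos
  have R : ∀ s r : ℝ, s * s = 1 → r * r = 1 → ∀ m : ℕ, m ≤ 2 * κ + 1 → s • ep κ 0 ∈ Bs κ r m →
      Res {g : Gs n (κ + 1) | pr κ g ∈ Bs κ r m} {g : Gs n (κ + 1) | pr κ g = s • ep κ 0} := by
    intro s r hs hr m hm hb
    exact res_fib ho hκ (su_unit κ hr m) (su_supp κ r m) (Bs_ok κ hr hm) hb (su_unit κ hs 0) (su_supp κ s 0)
  refine ⟨?_, ?_, ?_, ?_, ?_, ?_, ?_, ?_, ?_, ?_⟩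
  · intro m; exact (Bs_open κ 1 m).preimage (pr_cont κ)
  · intro m; exact (Bs_open κ (-1) m).preimage (pr_cont κ)
  · intro m
    ext g
    simp only [Set.mem_union, Set.mem_ofPred_eq, Bs, Zs]
    constructor
    · rintro ((⟨i, hi, h⟩ | h) | (⟨i, hi, h⟩ | h))
      · exact ⟨i, hi.le, h⟩
      · exact ⟨m, le_rfl, fun h0 => by rw [h0] at h; simp at h⟩
      · exact ⟨i, hi.le, h⟩
      · exact ⟨m, le_rfl, fun h0 => by rw [h0] at h; simp at h⟩
    · rintro ⟨i, hi, h⟩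
      rcases hi.lt_or_eq with hi | rfl
      · exact Or.inl (Or.inl ⟨i, hi, h⟩)
      · rcases lt_or_gt_of_ne h with h | h
        · right; right; linarith
        · left; right; linarith
  · intro m
    ext g
    simp only [Set.mem_inter_iff, Set.mem_ofPred_eq, Bs, Zs]
    constructor
    · rintro ⟨(⟨i, hi, h⟩ | h), (⟨j, hj, h'⟩ | h')⟩
      · exact ⟨i, by omega, h⟩
      · exact ⟨i, by omega, h⟩
      · exact ⟨j, by omega, h'⟩
      · linarith
    · rintro ⟨i, hi, h⟩
      exact ⟨Or.inl ⟨i, by omega, h⟩, Or.inl ⟨i, by omega, h⟩⟩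
  · ext g
    simp only [Set.mem_inter_iff, Set.mem_ofPred_eq, Bs, Set.mem_empty_iff_false, iff_false]
    rintro ⟨(⟨i, hi, h⟩ | h), (⟨j, hj, h'⟩ | h')⟩
    · omega
    · omega
    · omega
    · linarith
  · intro m hm
    refine R 1 1 h1 h1 m hm ?_
    rcases m with _ | m
    · exact base0 1 h1
    · exact base 1 1 h1 m
  · intro m hm
    exact R 1 (-1) h1 h2 _ hm (base 1 (-1) h1 m)
  · exact R (-1) (-1) h2 h2 0 (by omega) (base0 _ h2)
  · exact R (-1) 1 h2 h1 1 (by omega) (base _ _ h2 0)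
  · rw [Set.eq_univ_iff_forall]
    intro g
    by_contra hcon
    have hz : ∀ i ≤ 2 * (κ : ℕ) + 1, cc κ i (pr κ g) = 0 := by
      intro i hi
      by_contra h
      exact hcon ⟨i, hi, h⟩
    have hv : pr κ g = 0 := by
      funext j
      by_cases hj : κ < j
      · exact pr_supp κ g j hj
      · have hj' : (j : ℕ) ≤ κ := by
          rw [not_lt] at hj; exact hj
        have a1 := hz (2 * (κ - j)) (by omega)
        have a2 := hz (2 * (κ - j) + 1) (by omega)
        have i1 : idx κ (2 * (κ - j)) = j := by
          apply Fin.ext; simp only [idx]; omega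
        have i2 : idx κ (2 * (κ - j) + 1) = j := by
          apply Fin.ext; simp only [idx]; omega
        unfold cc at a1 a2
        rw [if_pos (by omega), i1] at a1
        rw [if_neg (by omega), i2] at a2
        exact Complex.ext a1 a2
    have := pr_unit κ g
    rw [hv] at this
    simp at this

theorem Gs_one (hn : 0 < n) (g : Mc n) (hg : g ∈ Gs n 1) : g = 1 := by
  obtain ⟨h1, h2, h3⟩ := hg
  let o : Fin n := ⟨0, hn⟩
  have col : ∀ j : Fin n, j ≠ o → ∀ i, g i j = if i = j then 1 else 0 := by
    intro j hj i
    have hj1 : 1 ≤ (j : ℕ) := by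
      by_contra h
      apply hj
      apply Fin.ext
      change (j : ℕ) = 0
      omega
    have := congrFun (h3 j hj1) i
    rw [mulVec_single_one] at this
    simpa [Pi.single_apply] using this
  have row : ∀ j : Fin n, j ≠ o → g j o = 0 := by
    intro j hj
    have := congrFun (congrFun h1 j) o
    rw [mul_apply, one_apply_ne hj] at this
    simp only [conjTranspose_apply, col j hj] at this
    simpa using this
  have e : g = Dg o (g o o) := by
    ext i j
    unfold Dg
    rw [diagonal_apply]
    by_cases hj : j = o
    · subst hj
      by_cases hi : i = o
      · subst hi; simp
      · rw [if_neg hi, row i hi]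
    · rw [col j hj]
      by_cases hij : i = j
      · subst hij; simp [Function.update_of_ne hj]
      · simp [hij]
  have h4 : g o o = 1 := by rw [e, Dg_det] at h2; exact h2
  rw [e, h4, Dg_one]

theorem one_mem_Gs (k : ℕ) : (1 : Mc n) ∈ Gs n k := by
  refine ⟨by simp, by simp, fun j _ => by rw [one_mulVec]⟩

theorem topC_G (hn : 0 < n) (k : ℕ) : k + 1 ≤ n → ∃ x : ℕ → Cochain (Gs n (k + 1)), TopC Set.univ k x := by
  induction k with
  | zero =>
    intro _
    exact ⟨_, topC_point ⟨1, one_mem_Gs _⟩ (fun y => Subtype.ext (Gs_one hn _ y.2))⟩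
  | succ k ih =>
    intro hk
    obtain ⟨x, hx⟩ := ih (by omega)
    let κ : Fin n := ⟨k + 1, by omega⟩
    let o : Fin n := ⟨0, hn⟩
    have S := sph_G (κ := κ) (o := o) rfl (by intro h; exact absurd (congrArg Fin.val h) (by simp [o, κ]))
    refine S.main k rfl ?_
    have e0 : (1 : ℝ) • ep κ 0 = Pi.single κ 1 := by
      rw [one_smul]; unfold ep
      have : idx κ 0 = κ := by apply Fin.ext; simp [idx]
      rw [this]; simp
    rw [e0]
    have m1 : ∀ g : Gs n (k + 1), g.1 ∈ Gs n (κ + 1) := fun g =>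
      ⟨g.2.1, g.2.2.1, fun j hj => g.2.2.2 j (by change k + 1 + 1 ≤ (j : ℕ) at hj; omega)⟩
    let i : C(Gs n (k + 1), Gs n (κ + 1)) := ⟨fun g => ⟨g.1, m1 g⟩, by fun_prop⟩
    have hi : ∀ y, i y ∈ {g : Gs n (κ + 1) | pr κ g = Pi.single κ 1} := fun y => y.2.2.2 κ le_rfl
    have m2 : ∀ g : {g : Gs n (κ + 1) | pr κ g = Pi.single κ 1}, g.1.1 ∈ Gs n (k + 1) := by
      intro g
      refine ⟨g.1.2.1, g.1.2.2.1, fun j hj => ?_⟩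
      by_cases h : j = κ
      · subst h; exact g.2
      · refine g.1.2.2.2 j ?_
        have : (j : ℕ) ≠ k + 1 := fun h' => h (Fin.ext h')
        change k + 1 + 1 ≤ (j : ℕ)
        omega
    exact hx.transfer i hi ⟨fun g => ⟨g.1.1, m2 g⟩, by fun_prop⟩ (fun _ => rfl) (fun _ => rfl)

theorem Gs_su : Gs n n = (Matrix.specialUnitaryGroup (Fin n) ℂ : Set (Mc n)) := by
  ext g
  simp only [Gs, Set.mem_ofPred_eq, SetLike.mem_coe, mem_specialUnitaryGroup_iff, mem_unitaryGroup_iff']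
  constructor
  · rintro ⟨h1, h2, _⟩; exact ⟨h1, h2⟩
  · rintro ⟨h1, h2⟩; exact ⟨h1, h2, fun j hj => by omega⟩

theorem topC_SU (hn : 0 < n) :
    ∃ x : ℕ → Cochain (Matrix.specialUnitaryGroup (Fin n) ℂ), TopC Set.univ (n - 1) x := by
  have h := topC_G hn (n - 1) (by omega)
  have e : n - 1 + 1 = n := by omega
  rw [e] at h
  obtain ⟨x, hx⟩ := h
  exact hx.transfer (A := Set.univ)
    (⟨fun g => ⟨g.1, Gs_su.subset g.2⟩, by fun_prop⟩ : C(Gs n n, specialUnitaryGroup (Fin n) ℂ))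
    (fun _ => trivial)
    ⟨fun g => ⟨g.1.1, Gs_su.superset g.1.2⟩, by fun_prop⟩ (fun _ => rfl) (fun _ => rfl)

theorem RR_P {X : Type*} [TopologicalSpace X] (x P : ℕ → Cochain X) (N : ℕ)
    (PS : ∀ j, P (j + 1) = cup (P j) (x (N - j))) (k : ℕ) :
    k ≤ N → RR x k (P (N - k)) = P N := by
  induction k with
  | zero => intro _; rfl
  | succ k ih =>
    intro hk
    rw [← ih (by omega)]
    obtain ⟨j, hj⟩ : ∃ j, N - k = j + 1 := ⟨N - k - 1, by omega⟩
    rw [hj, PS, show N - (k + 1) = j by omega, show N - j = k + 1 by omega]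
    rfl

theorem final {Y : Type*} [TopologicalSpace Y] (hn : 3 ≤ n)
    (E : ContinuousMap.HomotopyEquiv (Matrix.specialUnitaryGroup (Fin n) ℂ) Y)
    (U : Finset (Set Y)) (hU : GC U) (hcov : ⋃₀ (U : Set (Set Y)) = Set.univ) :
    4 * n ^ 3 + 5 * n + 6 ≤ 6 * U.card + 3 * n ^ 2 := by
  classical
  obtain ⟨x, hx⟩ := topC_SU (n := n) (by omega)
  let φ : C(Y, specialUnitaryGroup (Fin n) ℂ) := E.invFun
  let y : ℕ → Cochain Y := fun i => pb φ (x i)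
  let P : ℕ → Cochain Y := fun j => Nat.rec one (fun j p => cup p (y (n - 1 - j))) j
  have hP : RR y (n - 1) one = P (n - 1) := by
    have := RR_P y P (n - 1) (fun j => rfl) (n - 1) le_rfl
    rw [Nat.sub_self] at this
    exact this
  refine bound hU hcov n hn (fun j => y (n - j)) P ?_ ?_ rfl ?_ ?_
  · intro j h1 h2
    exact hom_pb _ (hx.hom _ (by omega) (by omega))
  · intro j h1 h2
    exact (hx.closed _ (by omega) (by omega)).pb _ _ (fun _ _ => trivial)
  · intro j
    change cup (P j) (y (n - 1 - j)) = cup (P j) (y (n - (j + 1)))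
    rw [show n - 1 - j = n - (j + 1) by omega]
  · rw [← hP]
    intro hex
    have e : RR y (n - 1) one = pb φ (RR x (n - 1) one) := by rw [pb_RR]; rfl
    rw [e] at hex
    apply hx.nex
    have h2 := hex.pb E.toFun Set.univ (fun _ _ => trivial)
    rw [← pb_comp] at h2
    have hc : Closed Set.univ (RR x (n - 1) one) := RR_closed _ hx.closed _ closed_one
    have h3 := homotopic_ex E.left_inv hc
    have h4 := h3.of_add h2
    rwa [pb_id] at h4

end geom3
end CT

/-- The covering type of the special unitary group `SU(n)` is at least `(4n³−3n²+5n+6)/6`: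
every good cover of any space homotopy equivalent to `SU(n)` has at least that many
members.  (The numerator is divisible by 6, so `/` is exact.) -/
theorem stmt10 (n : ℕ) (hn : 3 ≤ n) (Y : Type*) [TopologicalSpace Y]
    (h : Nonempty (ContinuousMap.HomotopyEquiv ↥(Matrix.specialUnitaryGroup (Fin n) ℂ) Y))
    (U : Finset (Set Y)) (hU : IsGoodCover U) :
    (4 * n ^ 3 - 3 * n ^ 2 + 5 * n + 6) / 6 ≤ U.card := by
  obtain ⟨E⟩ := h
  have key := CT.final hn E U ⟨hU.1, hU.2.2⟩ hU.2.1
  have h2 : n ^ 2 ≤ n ^ 3 := Nat.pow_le_pow_right (by omega) (by omega)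
  generalize n ^ 3 = a at *
  generalize n ^ 2 = b at *
  omega
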